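/- There exists a constant C > 0, depending only on α and β, with the following property. Let (u_k, λ_k, f_k) be a sequence of real Dirichlet quasimode data on the stadium S with ‖u_k‖_{L²(S)} = 1 for all k, λ_k → ∞, and ‖f_k‖_{L²(S)} → 0 (an o(1) quasimode). Then for all sufficiently large k, ‖u_k‖_{L²(W)} ≥ C λ_k^{−4}, where ‖u_k‖_{L²(W)} is the L² norm of u_k over the wings W. -/

import Mathlib

open MeasureTheory Real Set Filter

noncomputable section

/-- Partial derivative in the first (x) variable. -/
def pdx (u : ℝ × ℝ → ℝ) (p : ℝ × ℝ) : ℝ := deriv (fun t => u (t, p.2)) p.1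

/-- Partial derivative in the second (y) variable. -/
def pdy (u : ℝ × ℝ → ℝ) (p : ℝ × ℝ) : ℝ := deriv (fun t => u (p.1, t)) p.2

/-- The positive Laplacian `Δu = -u_xx - u_yy`. -/
def lap (u : ℝ × ℝ → ℝ) (p : ℝ × ℝ) : ℝ := -(pdx (pdx u) p) - (pdy (pdy u) p)

/-- The central rectangle `R = [-α,α] × [-β,β]`. -/
def Rect (α β : ℝ) : Set (ℝ × ℝ) := Icc (-α) α ×ˢ Icc (-β) β

/-- The wings `W = W₊ ∪ W₋`, two half-discs of radius β centered at `(±α, 0)`. -/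
def Wings (α β : ℝ) : Set (ℝ × ℝ) :=
  {p | (p.1 - α) ^ 2 + p.2 ^ 2 ≤ β ^ 2 ∧ α ≤ p.1} ∪
  {p | (p.1 + α) ^ 2 + p.2 ^ 2 ≤ β ^ 2 ∧ p.1 ≤ -α}

/-- The Bunimovich stadium `S = R ∪ W`. -/
def Stadium (α β : ℝ) : Set (ℝ × ℝ) := Rect α β ∪ Wings α β

/-- The boundary `∂S`: two horizontal segments and two semicircles. -/
def StadiumBoundary (α β : ℝ) : Set (ℝ × ℝ) :=
  {p | |p.1| ≤ α ∧ (p.2 = β ∨ p.2 = -β)} ∪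
  {p | (|p.1| - α) ^ 2 + p.2 ^ 2 = β ^ 2 ∧ α ≤ |p.1|}

/-- Boundary integral `∫_{∂S} g dl` of an integrand `g` depending on the boundary point
and the outward unit normal at that point. -/
def bdryInt (α β : ℝ) (g : ℝ × ℝ → ℝ × ℝ → ℝ) : ℝ :=
  (∫ x in (-α)..α, (g (x, β) (0, 1) + g (x, -β) (0, -1))) +
  β * ∫ θ in (-(π / 2))..(π / 2),
    (g (α + β * cos θ, β * sin θ) (cos θ, sin θ) +
     g (-(α + β * cos θ), β * sin θ) (-cos θ, sin θ))

/-- Boundary integral `∫_{∂S ∩ W} g dl` over the two semicircles only. -/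
def bdryIntW (α β : ℝ) (g : ℝ × ℝ → ℝ × ℝ → ℝ) : ℝ :=
  β * ∫ θ in (-(π / 2))..(π / 2),
    (g (α + β * cos θ, β * sin θ) (cos θ, sin θ) +
     g (-(α + β * cos θ), β * sin θ) (-cos θ, sin θ))

/-- The normal derivative `∂_N u = n₁ ∂_x u + n₂ ∂_y u` at a boundary point `p`
with outward unit normal `n`. -/
def nderiv (u : ℝ × ℝ → ℝ) (p n : ℝ × ℝ) : ℝ := n.1 * pdx u p + n.2 * pdy u p

/-- A real Dirichlet quasimode datum `(u, λ, f)` on the stadium: `λ > 0`, `u` smooth on a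
neighborhood of `S`, `u = 0` on `∂S`, and `(Δ - λ²) u = f` on `S`. -/
structure QMDatum (α β : ℝ) where
  u : ℝ × ℝ → ℝ
  lam : ℝ
  f : ℝ × ℝ → ℝ
  lam_pos : 0 < lam
  smooth : ∃ V : Set (ℝ × ℝ), IsOpen V ∧ Stadium α β ⊆ V ∧ ContDiffOn ℝ (⊤ : ℕ∞) u V
  dirichlet : ∀ p ∈ StadiumBoundary α β, u p = 0
  eqn : ∀ p ∈ Stadium α β, lap u p - lam ^ 2 * u p = f p


structure Jet (u ux uy uxx uxy uyy : ℝ × ℝ → ℝ) : Prop where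
  cu : Continuous u
  cux : Continuous ux
  cuy : Continuous uy
  cuxx : Continuous uxx
  cuxy : Continuous uxy
  cuyy : Continuous uyy
  chain : ∀ (p q : ℝ → ℝ) (p' q' t : ℝ), HasDerivAt p p' t → HasDerivAt q q' t →
    HasDerivAt (fun t => u (p t, q t)) (p' * ux (p t, q t) + q' * uy (p t, q t)) t
  dxx : ∀ x y, HasDerivAt (fun t => ux (t, y)) (uxx (x, y)) x
  dxy : ∀ x y, HasDerivAt (fun t => ux (x, t)) (uxy (x, y)) y
  dyx : ∀ x y, HasDerivAt (fun t => uy (t, y)) (uxy (x, y)) x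
  dyy : ∀ x y, HasDerivAt (fun t => uy (x, t)) (uyy (x, y)) y

lemma Jet.dx {u ux uy uxx uxy uyy : ℝ × ℝ → ℝ} (J : Jet u ux uy uxx uxy uyy) (x y : ℝ) :
    HasDerivAt (fun t => u (t, y)) (ux (x, y)) x := by
  simpa using J.chain (fun t => t) (fun _ => y) 1 0 x (hasDerivAt_id' x) (hasDerivAt_const x y)

lemma Jet.dy {u ux uy uxx uxy uyy : ℝ × ℝ → ℝ} (J : Jet u ux uy uxx uxy uyy) (x y : ℝ) :
    HasDerivAt (fun t => u (x, t)) (uy (x, y)) y := by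
  simpa using J.chain (fun _ => x) (fun t => t) 0 1 y (hasDerivAt_const y x) (hasDerivAt_id' y)

lemma chain_of_contDiff {u : ℝ × ℝ → ℝ} (h : ContDiff ℝ 1 u) (p q : ℝ → ℝ) (p' q' t : ℝ)
    (hp : HasDerivAt p p' t) (hq : HasDerivAt q q' t) :
    HasDerivAt (fun t => u (p t, q t))
      (p' * fderiv ℝ u (p t, q t) (1, 0) + q' * fderiv ℝ u (p t, q t) (0, 1)) t := by
  have h1 : HasFDerivAt u (fderiv ℝ u (p t, q t)) (p t, q t) :=
    ((h.differentiable (by norm_num)) _).hasFDerivAt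
  have h2 : HasDerivAt (fun t => (p t, q t)) (p', q') t := hp.prodMk hq
  have h3 := h1.comp_hasDerivAt t h2
  have e : ((p', q') : ℝ × ℝ) = p' • ((1, 0) : ℝ × ℝ) + q' • ((0, 1) : ℝ × ℝ) := by
    ext <;> simp
  rw [e, map_add, map_smul, map_smul] at h3
  simp only [smul_eq_mul] at h3
  exact h3

lemma jet_of_contDiff {u : ℝ × ℝ → ℝ} (h : ContDiff ℝ (⊤ : ℕ∞) u) :
    Jet u (fun p => fderiv ℝ u p (1, 0)) (fun p => fderiv ℝ u p (0, 1))
      (fun p => fderiv ℝ (fun p => fderiv ℝ u p (1, 0)) p (1, 0))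
      (fun p => fderiv ℝ (fun p => fderiv ℝ u p (1, 0)) p (0, 1))
      (fun p => fderiv ℝ (fun p => fderiv ℝ u p (0, 1)) p (0, 1)) := by
  have hd : ContDiff ℝ (⊤ : ℕ∞) (fderiv ℝ u) := h.fderiv_right (by simp)
  have hx : ∀ v, ContDiff ℝ (⊤ : ℕ∞) (fun p => fderiv ℝ u p v) := fun v =>
    hd.clm_apply contDiff_const
  have hxx : ∀ v w, Continuous (fun p => fderiv ℝ (fun p => fderiv ℝ u p v) p w) := fun v w =>
    (((hx v).fderiv_right (m := 0) (by simp)).continuous).clm_apply continuous_const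
  have h1 : ContDiff ℝ 1 u := h.of_le (by simp)
  have hx1 : ∀ v, ContDiff ℝ 1 (fun p => fderiv ℝ u p v) := fun v => (hx v).of_le (by simp)
  have dX : ∀ (w : ℝ × ℝ → ℝ), ContDiff ℝ 1 w → ∀ x y,
      HasDerivAt (fun t => w (t, y)) (fderiv ℝ w (x, y) (1, 0)) x := fun w hw x y => by
    simpa using chain_of_contDiff hw (fun t => t) (fun _ => y) 1 0 x (hasDerivAt_id' x)
      (hasDerivAt_const x y)
  have dY : ∀ (w : ℝ × ℝ → ℝ), ContDiff ℝ 1 w → ∀ x y,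
      HasDerivAt (fun t => w (x, t)) (fderiv ℝ w (x, y) (0, 1)) y := fun w hw x y => by
    simpa using chain_of_contDiff hw (fun _ => x) (fun t => t) 0 1 y (hasDerivAt_const y x)
      (hasDerivAt_id' y)
  have e : ∀ v w p, fderiv ℝ (fun p => fderiv ℝ u p v) p w = fderiv ℝ (fderiv ℝ u) p w v := by
    intro v w p
    have : DifferentiableAt ℝ (fderiv ℝ u) p := (hd.differentiable (by simp)) p
    rw [fderiv_clm_apply this (differentiableAt_const v)]
    simp
  refine ⟨h.continuous, (hx _).continuous, (hx _).continuous, hxx _ _, hxx _ _, hxx _ _,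
    chain_of_contDiff h1, dX _ (hx1 _), dY _ (hx1 _), ?_, dY _ (hx1 _)⟩
  intro x y
  have h2 := dX _ (hx1 (0, 1)) x y
  have : fderiv ℝ (fun p => fderiv ℝ u p (0, 1)) (x, y) (1, 0)
      = fderiv ℝ (fun p => fderiv ℝ u p (1, 0)) (x, y) (0, 1) := by
    rw [e, e]
    have := (h.contDiffAt (x := (x, y))).isSymmSndFDerivAt (by simp only [minSmoothness_of_isRCLikeNormedField]; exact WithTop.coe_le_coe.2 (le_top : (2 : ℕ∞) ≤ ⊤))
    exact this _ _
  rw [this] at h2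
  exact h2

lemma exists_ext {u : ℝ × ℝ → ℝ} {V S : Set (ℝ × ℝ)} (hV : IsOpen V) (hS : IsClosed S)
    (hSV : S ⊆ V) (h : ContDiffOn ℝ (⊤ : ℕ∞) u V) :
    ∃ v : ℝ × ℝ → ℝ, ContDiff ℝ (⊤ : ℕ∞) v ∧ ∀ p ∈ S, u =ᶠ[nhds p] v := by
  obtain ⟨ψ, h0, h1, -⟩ := exists_contMDiffMap_zero_one_nhds_of_isClosed
    (modelWithCornersSelf ℝ (ℝ × ℝ)) (n := (⊤ : ℕ∞)) hV.isClosed_compl hS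
    (by rw [← subset_compl_iff_disjoint_left, compl_compl]; exact hSV)
  have hψ : ContDiff ℝ (⊤ : ℕ∞) (fun p => ψ p) := ψ.contMDiff.contDiff
  refine ⟨fun p => ψ p * u p, ?_, ?_⟩
  · rw [contDiff_iff_contDiffAt]
    intro p
    by_cases hp : p ∈ V
    · exact hψ.contDiffAt.mul (h.contDiffAt (hV.mem_nhds hp))
    · have : (fun p => ψ p * u p) =ᶠ[nhds p] fun _ => 0 := by
        filter_upwards [(eventually_nhdsSet_iff_forall.1 h0) p hp] with q hq
        rw [hq]; simp
      exact contDiffAt_const.congr_of_eventuallyEq this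
  · intro p hp
    filter_upwards [(eventually_nhdsSet_iff_forall.1 h1) p hp] with q hq
    rw [hq]; simp

lemma pdx_congr {u v : ℝ × ℝ → ℝ} {p : ℝ × ℝ} (h : u =ᶠ[nhds p] v) : pdx u p = pdx v p := by
  unfold pdx
  apply Filter.EventuallyEq.deriv_eq
  have : Tendsto (fun t : ℝ => (t, p.2)) (nhds p.1) (nhds p) := by
    have : Continuous (fun t : ℝ => (t, p.2)) := by fun_prop
    simpa using this.tendsto p.1
  exact this.eventually h

lemma pdy_congr {u v : ℝ × ℝ → ℝ} {p : ℝ × ℝ} (h : u =ᶠ[nhds p] v) : pdy u p = pdy v p := by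
  unfold pdy
  apply Filter.EventuallyEq.deriv_eq
  have : Tendsto (fun t : ℝ => (p.1, t)) (nhds p.2) (nhds p) := by
    have : Continuous (fun t : ℝ => (p.1, t)) := by fun_prop
    simpa using this.tendsto p.2
  exact this.eventually h

lemma lap_congr {u v : ℝ × ℝ → ℝ} {p : ℝ × ℝ} (h : u =ᶠ[nhds p] v) : lap u p = lap v p := by
  unfold lap
  rw [pdx_congr (u := pdx u) (v := pdx v), pdy_congr (u := pdy u) (v := pdy v)]
  · exact (eventually_eventually_nhds.2 h).mono fun q hq => pdy_congr hq
  · exact (eventually_eventually_nhds.2 h).mono fun q hq => pdx_congr hq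

lemma Jet.lap_eq {u ux uy uxx uxy uyy : ℝ × ℝ → ℝ} (J : Jet u ux uy uxx uxy uyy) (p : ℝ × ℝ) :
    lap u p = - uxx p - uyy p := by
  have h1 : pdx u = ux := by
    ext ⟨x, y⟩; exact (J.dx x y).deriv
  have h2 : pdy u = uy := by
    ext ⟨x, y⟩; exact (J.dy x y).deriv
  obtain ⟨x, y⟩ := p
  unfold lap
  rw [h1, h2]
  have h3 : pdx ux (x, y) = uxx (x, y) := (J.dxx x y).deriv
  have h4 : pdy uy (x, y) = uyy (x, y) := (J.dyy x y).deriv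
  rw [h3, h4]

lemma isCompact_Stadium (α β : ℝ) : IsCompact (Stadium α β) := by
  have hc : IsClosed (Stadium α β) := by
    unfold Stadium Rect Wings
    refine IsClosed.union (isClosed_Icc.prod isClosed_Icc) (IsClosed.union ?_ ?_)
    · exact IsClosed.inter (isClosed_le (f := fun p : ℝ × ℝ => (p.1 - α) ^ 2 + p.2 ^ 2)
        (by fun_prop) continuous_const) (isClosed_le continuous_const continuous_fst)
    · exact IsClosed.inter (isClosed_le (f := fun p : ℝ × ℝ => (p.1 + α) ^ 2 + p.2 ^ 2)
        (by fun_prop) continuous_const) (isClosed_le continuous_fst continuous_const)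
  have hsub : Stadium α β ⊆ Icc (-(|α| + |β|)) (|α| + |β|) ×ˢ Icc (-(|α| + |β|)) (|α| + |β|) := by
    rintro ⟨x, y⟩ hp
    have key : ∀ a b : ℝ, a ^ 2 + b ^ 2 ≤ β ^ 2 → |a| ≤ |β| ∧ |b| ≤ |β| := fun a b h =>
      ⟨sq_le_sq.1 (by nlinarith [sq_nonneg b]), sq_le_sq.1 (by nlinarith [sq_nonneg a])⟩
    have a1 := abs_le.1 (le_refl |α|)
    have b1 := abs_le.1 (le_refl |β|)
    rcases hp with hp | hp | hp
    · obtain ⟨⟨h1, h2⟩, h3, h4⟩ := hp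
      simp only at h1 h2 h3 h4
      refine ⟨⟨?_, ?_⟩, ?_, ?_⟩ <;> simp only <;> linarith
    all_goals
      obtain ⟨h1, h2⟩ := hp
      obtain ⟨h3, h4⟩ := key _ _ h1
      rw [abs_le] at h3 h4
      simp only at h3 h4 h2
      refine ⟨⟨?_, ?_⟩, ?_, ?_⟩ <;> simp only <;> linarith
  exact (isCompact_Icc.prod isCompact_Icc).of_isClosed_subset hc hsub

lemma exists_jet {α β : ℝ} (d : QMDatum α β) : ∃ v vx vy vxx vxy vyy : ℝ × ℝ → ℝ,
    Jet v vx vy vxx vxy vyy ∧ ∀ p ∈ Stadium α β,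
      d.u p = v p ∧ d.f p = - vxx p - vyy p - d.lam ^ 2 * v p := by
  obtain ⟨V, hV, hSV, h⟩ := d.smooth
  obtain ⟨v, hv, he⟩ := exists_ext hV (isCompact_Stadium α β).isClosed hSV h
  refine ⟨v, _, _, _, _, _, jet_of_contDiff hv, fun p hp => ⟨(he p hp).eq_of_nhds, ?_⟩⟩
  rw [← d.eqn p hp, lap_congr (he p hp), (jet_of_contDiff hv).lap_eq, (he p hp).eq_of_nhds]

def gg (α β y : ℝ) : ℝ := α + √(β ^ 2 - y ^ 2)
def hh (α β x : ℝ) : ℝ := √(β ^ 2 - (max (|x| - α) 0) ^ 2)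

lemma mem_S_x {α β : ℝ} (hα : 0 < α) (hβ : 0 < β) (x y : ℝ) :
    (x, y) ∈ Stadium α β ↔ y ∈ Icc (-β) β ∧ x ∈ Icc (-gg α β y) (gg α β y) := by
  unfold Stadium Rect Wings gg
  have h0 := Real.sqrt_nonneg (β ^ 2 - y ^ 2)
  simp only [mem_union, mem_prod, mem_Icc, mem_ofPred_eq]
  constructor
  · rintro (⟨⟨h1, h2⟩, h3⟩ | ⟨h1, h2⟩ | ⟨h1, h2⟩)
    · exact ⟨h3, by linarith, by linarith⟩
    · have hy : |y| ≤ β := abs_le_of_sq_le_sq (by nlinarith [sq_nonneg (x - α)]) hβ.le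
      have := Real.le_sqrt_of_sq_le (x := x - α) (y := β ^ 2 - y ^ 2) (by linarith)
      exact ⟨abs_le.1 hy, by linarith, by linarith⟩
    · have hy : |y| ≤ β := abs_le_of_sq_le_sq (by nlinarith [sq_nonneg (x + α)]) hβ.le
      have := Real.le_sqrt_of_sq_le (x := -(x + α)) (y := β ^ 2 - y ^ 2) (by linarith [neg_sq (x + α)])
      exact ⟨abs_le.1 hy, by linarith, by linarith⟩
  · rintro ⟨h3, h1, h2⟩
    have hs : √(β ^ 2 - y ^ 2) ^ 2 = β ^ 2 - y ^ 2 := Real.sq_sqrt (by nlinarith [h3.1, h3.2])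
    by_cases ha : α ≤ x
    · right; left; exact ⟨by nlinarith, ha⟩
    by_cases hb : x ≤ -α
    · right; right; exact ⟨by nlinarith, hb⟩
    · left; exact ⟨⟨by linarith, by linarith⟩, h3⟩

lemma mem_S_y {α β : ℝ} (hα : 0 < α) (hβ : 0 < β) (x y : ℝ) :
    (x, y) ∈ Stadium α β ↔
      x ∈ Icc (-(α + β)) (α + β) ∧ y ∈ Icc (-hh α β x) (hh α β x) := by
  have hI : x ∈ Icc (-(α + β)) (α + β) ↔ |x| ≤ α + β := by rw [mem_Icc, ← abs_le]
  have hJ : y ∈ Icc (-hh α β x) (hh α β x) ↔ |y| ≤ hh α β x := by rw [mem_Icc, ← abs_le]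
  rw [mem_S_x hα hβ, hI, hJ, mem_Icc, mem_Icc, ← abs_le, ← abs_le]
  unfold gg hh
  have hx := abs_nonneg x
  have hy := abs_nonneg y
  have ey : y ^ 2 = |y| ^ 2 := (sq_abs y).symm
  constructor
  · rintro ⟨h1, h2⟩
    have hn : 0 ≤ β ^ 2 - y ^ 2 := by nlinarith
    have hs := Real.sq_sqrt hn
    have h0 := Real.sqrt_nonneg (β ^ 2 - y ^ 2)
    have hb : √(β ^ 2 - y ^ 2) ≤ β := by
      apply Real.sqrt_le_iff.2 ⟨hβ.le, by nlinarith⟩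
    refine ⟨by linarith, Real.abs_le_sqrt ?_⟩
    rcases le_total (|x| - α) 0 with h | h
    · rw [max_eq_right h]; linarith
    · rw [max_eq_left h]; nlinarith
  · rintro ⟨h1, h2⟩
    have hm : max (|x| - α) 0 ≤ β := max_le (by linarith) hβ.le
    have hm0 : 0 ≤ max (|x| - α) 0 := le_max_right _ _
    have hn : 0 ≤ β ^ 2 - (max (|x| - α) 0) ^ 2 := by nlinarith
    have hs := Real.sq_sqrt hn
    have h3 : y ^ 2 ≤ β ^ 2 - (max (|x| - α) 0) ^ 2 := by rw [ey, ← hs]; gcongr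
    refine ⟨by apply abs_le_of_sq_le_sq (by nlinarith) hβ.le, ?_⟩
    have := Real.le_sqrt_of_sq_le (x := max (|x| - α) 0) (y := β ^ 2 - y ^ 2) (by linarith)
    linarith [le_max_left (|x| - α) 0]

lemma bd_x {α β : ℝ} (hα : 0 < α) (hβ : 0 < β) {y : ℝ} (hy : y ∈ Icc (-β) β) :
    (gg α β y, y) ∈ StadiumBoundary α β ∧ (-gg α β y, y) ∈ StadiumBoundary α β := by
  have h0 := Real.sqrt_nonneg (β ^ 2 - y ^ 2)
  have hs : √(β ^ 2 - y ^ 2) ^ 2 = β ^ 2 - y ^ 2 := Real.sq_sqrt (by nlinarith [hy.1, hy.2])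
  have e : |gg α β y| = α + √(β ^ 2 - y ^ 2) := abs_of_nonneg (by unfold gg; linarith)
  constructor <;> right
  · simp only [mem_ofPred_eq, e]; constructor <;> nlinarith
  · simp only [mem_ofPred_eq, abs_neg, e]; constructor <;> nlinarith

lemma bd_y {α β : ℝ} (hα : 0 < α) (hβ : 0 < β) {x : ℝ} (hx : x ∈ Icc (-(α + β)) (α + β)) :
    (x, hh α β x) ∈ StadiumBoundary α β ∧ (x, -hh α β x) ∈ StadiumBoundary α β := by
  have hx' : |x| ≤ α + β := abs_le.2 ⟨hx.1, hx.2⟩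
  unfold hh
  rcases le_total (|x| - α) 0 with h | h
  · rw [max_eq_right h]
    have : √(β ^ 2 - 0 ^ 2) = β := by rw [zero_pow (by norm_num), sub_zero, Real.sqrt_sq hβ.le]
    rw [this]
    constructor <;> left
    · exact ⟨by simp only; linarith, Or.inl rfl⟩
    · exact ⟨by simp only; linarith, Or.inr rfl⟩
  · rw [max_eq_left h]
    have hs : √(β ^ 2 - (|x| - α) ^ 2) ^ 2 = β ^ 2 - (|x| - α) ^ 2 := Real.sq_sqrt (by nlinarith)
    constructor <;> right
    · exact ⟨by simp only; linarith, by simp only; linarith⟩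
    · exact ⟨by simp only [neg_sq]; linarith, by simp only; linarith⟩

lemma divx {α β : ℝ} (hα : 0 < α) (hβ : 0 < β) (F F' : ℝ × ℝ → ℝ) (hF : Continuous F)
    (hd : ∀ x y, x ≠ α → HasDerivAt (fun t => F (t, y)) (F' (x, y)) x)
    (hi : IntegrableOn F' (Stadium α β))
    (hs : ∀ y a b, IntervalIntegrable (fun t => F' (t, y)) volume a b) :
    ∫ p in Stadium α β, F' p = ∫ y in (-β)..β, (F (gg α β y, y) - F (-gg α β y, y)) := by
  have hm := (isCompact_Stadium α β).measurableSet
  rw [← integral_indicator hm, Measure.volume_eq_prod, integral_prod_symm]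
  swap
  · rw [← Measure.volume_eq_prod]; exact hi.integrable_indicator hm
  rw [intervalIntegral.integral_of_le (by linarith), ← integral_Icc_eq_integral_Ioc,
    ← integral_indicator measurableSet_Icc]
  congr 1
  ext y
  by_cases hy : y ∈ Icc (-β) β
  · rw [indicator_of_mem hy]
    have h0 : -gg α β y ≤ gg α β y := by
      unfold gg; linarith [Real.sqrt_nonneg (β ^ 2 - y ^ 2)]
    have := integral_eq_of_hasDerivAt_off_countable_of_le (fun t => F (t, y))
      (fun t => F' (t, y)) h0 (countable_singleton α) (by fun_prop)
      (fun x hx => hd x y hx.2) (hs y _ _)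
    rw [← this, intervalIntegral.integral_of_le h0, ← integral_Icc_eq_integral_Ioc,
      ← integral_indicator measurableSet_Icc]
    congr 1
    ext x
    by_cases hx : x ∈ Icc (-gg α β y) (gg α β y)
    · rw [indicator_of_mem hx, indicator_of_mem ((mem_S_x hα hβ x y).2 ⟨hy, hx⟩)]
    · rw [indicator_of_notMem hx, indicator_of_notMem (fun h => hx ((mem_S_x hα hβ x y).1 h).2)]
  · rw [indicator_of_notMem hy]
    rw [← integral_zero ℝ ℝ]
    congr 1
    ext x
    rw [indicator_of_notMem (fun h => hy ((mem_S_x hα hβ x y).1 h).1)]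

lemma divy {α β : ℝ} (hα : 0 < α) (hβ : 0 < β) (F F' : ℝ × ℝ → ℝ) (hF : Continuous F)
    (hF' : Continuous F')
    (hd : ∀ x y, HasDerivAt (fun t => F (x, t)) (F' (x, y)) y) :
    ∫ p in Stadium α β, F' p
      = ∫ x in (-(α + β))..(α + β), (F (x, hh α β x) - F (x, -hh α β x)) := by
  have hm := (isCompact_Stadium α β).measurableSet
  have hi : IntegrableOn F' (Stadium α β) :=
    hF'.continuousOn.integrableOn_compact (isCompact_Stadium α β)
  rw [← integral_indicator hm, Measure.volume_eq_prod, integral_prod]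
  swap
  · rw [← Measure.volume_eq_prod]; exact hi.integrable_indicator hm
  rw [intervalIntegral.integral_of_le (by linarith), ← integral_Icc_eq_integral_Ioc,
    ← integral_indicator measurableSet_Icc]
  congr 1
  ext x
  by_cases hx : x ∈ Icc (-(α + β)) (α + β)
  · rw [indicator_of_mem hx]
    have h0 : -hh α β x ≤ hh α β x := by
      unfold hh; linarith [Real.sqrt_nonneg (β ^ 2 - (max (|x| - α) 0) ^ 2)]
    have := intervalIntegral.integral_eq_sub_of_hasDerivAt (f := fun t => F (x, t))
      (f' := fun t => F' (x, t)) (a := -hh α β x) (b := hh α β x)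
      (fun y _ => hd x y) (Continuous.intervalIntegrable (by fun_prop) _ _)
    rw [← this, intervalIntegral.integral_of_le h0, ← integral_Icc_eq_integral_Ioc,
      ← integral_indicator measurableSet_Icc]
    congr 1
    ext y
    by_cases hy : y ∈ Icc (-hh α β x) (hh α β x)
    · rw [indicator_of_mem hy, indicator_of_mem ((mem_S_y hα hβ x y).2 ⟨hx, hy⟩)]
    · rw [indicator_of_notMem hy, indicator_of_notMem (fun h => hy ((mem_S_y hα hβ x y).1 h).2)]
  · rw [indicator_of_notMem hx]
    rw [← integral_zero ℝ ℝ]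
    congr 1
    ext y
    rw [indicator_of_notMem (fun h => hx ((mem_S_y hα hβ x y).1 h).1)]

lemma divx_zero {α β : ℝ} (hα : 0 < α) (hβ : 0 < β) (F F' : ℝ × ℝ → ℝ) (hF : Continuous F)
    (hd : ∀ x y, x ≠ α → HasDerivAt (fun t => F (t, y)) (F' (x, y)) x)
    (hi : IntegrableOn F' (Stadium α β))
    (hs : ∀ y a b, IntervalIntegrable (fun t => F' (t, y)) volume a b)
    (h0 : ∀ p ∈ StadiumBoundary α β, F p = 0) :
    ∫ p in Stadium α β, F' p = 0 := by
  rw [divx hα hβ F F' hF hd hi hs, intervalIntegral.integral_congr (g := fun _ => 0)]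
  · simp
  · intro y hy
    rw [uIcc_of_le (by linarith)] at hy
    obtain ⟨h1, h2⟩ := bd_x hα hβ hy
    simp [h0 _ h1, h0 _ h2]

lemma divx_zero' {α β : ℝ} (hα : 0 < α) (hβ : 0 < β) (F F' : ℝ × ℝ → ℝ) (hF : Continuous F)
    (hF' : Continuous F')
    (hd : ∀ x y, HasDerivAt (fun t => F (t, y)) (F' (x, y)) x)
    (h0 : ∀ p ∈ StadiumBoundary α β, F p = 0) :
    ∫ p in Stadium α β, F' p = 0 :=
  divx_zero hα hβ F F' hF (fun x y _ => hd x y)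
    (hF'.continuousOn.integrableOn_compact (isCompact_Stadium α β))
    (fun y a b => Continuous.intervalIntegrable (by fun_prop) _ _) h0

lemma divy_zero {α β : ℝ} (hα : 0 < α) (hβ : 0 < β) (F F' : ℝ × ℝ → ℝ) (hF : Continuous F)
    (hF' : Continuous F')
    (hd : ∀ x y, HasDerivAt (fun t => F (x, t)) (F' (x, y)) y)
    (h0 : ∀ p ∈ StadiumBoundary α β, F p = 0) :
    ∫ p in Stadium α β, F' p = 0 := by
  rw [divy hα hβ F F' hF hF' hd, intervalIntegral.integral_congr (g := fun _ => 0)]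
  · simp
  · intro x hx
    rw [uIcc_of_le (by linarith)] at hx
    obtain ⟨h1, h2⟩ := bd_y hα hβ hx
    simp [h0 _ h1, h0 _ h2]

lemma continuous_gg (α β : ℝ) : Continuous (gg α β) := by unfold gg; fun_prop
lemma continuous_hh (α β : ℝ) : Continuous (hh α β) := by unfold hh; fun_prop

lemma arc_x {α β : ℝ} (hβ : 0 < β) (G : ℝ × ℝ → ℝ) (hG : Continuous G) :
    ∫ y in (-β)..β, G (gg α β y, y)
      = ∫ θ in (-(π / 2))..(π / 2), β * (cos θ * G (α + β * cos θ, β * sin θ)) := by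
  have hg := continuous_gg α β
  have := intervalIntegral.integral_comp_mul_deriv (a := -(π / 2)) (b := π / 2)
    (f := fun θ => β * sin θ) (f' := fun θ => β * cos θ) (g := fun y => G (gg α β y, y))
    (fun θ _ => (Real.hasDerivAt_sin θ).const_mul β) (by fun_prop) (by fun_prop)
  simp only [sin_neg, sin_pi_div_two, mul_one, mul_neg] at this
  rw [← this]
  apply intervalIntegral.integral_congr
  intro θ hθ
  rw [uIcc_of_le (by linarith [pi_pos])] at hθ
  have hc : 0 ≤ cos θ := cos_nonneg_of_mem_Icc hθ
  have e : gg α β (β * sin θ) = α + β * cos θ := by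
    unfold gg
    rw [show β ^ 2 - (β * sin θ) ^ 2 = (β * cos θ) ^ 2 by nlinarith [sin_sq_add_cos_sq θ],
      Real.sqrt_sq (by positivity)]
  simp only [Function.comp, e]
  ring

lemma hh_arc {α β : ℝ} (hα : 0 < α) (hβ : 0 < β) {θ : ℝ} (hc : 0 ≤ cos θ) :
    hh α β (α + β * cos θ) = β * |sin θ| := by
  unfold hh
  have : 0 ≤ β * cos θ := by positivity
  rw [abs_of_nonneg (by linarith), add_sub_cancel_left, max_eq_left this,
    show β ^ 2 - (β * cos θ) ^ 2 = (β * sin θ) ^ 2 by nlinarith [sin_sq_add_cos_sq θ],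
      Real.sqrt_sq_eq_abs, abs_mul, abs_of_pos hβ]

lemma arc_y {α β : ℝ} (hα : 0 < α) (hβ : 0 < β) (G : ℝ × ℝ → ℝ) (hG : Continuous G) :
    ∫ x in α..(α + β), (G (x, hh α β x) - G (x, -hh α β x))
      = ∫ θ in (-(π / 2))..(π / 2), β * (sin θ * G (α + β * cos θ, β * sin θ)) := by
  have hg := continuous_hh α β
  have hp := pi_pos
  have d : ∀ θ : ℝ, HasDerivAt (fun θ => α + β * cos θ) (β * (- sin θ)) θ := fun θ =>
    ((Real.hasDerivAt_cos θ).const_mul β).const_add α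
  have t1 := intervalIntegral.integral_comp_mul_deriv (a := 0) (b := π / 2)
    (f := fun θ => α + β * cos θ) (f' := fun θ => β * (- sin θ))
    (g := fun x => G (x, hh α β x)) (fun θ _ => d θ) (by fun_prop) (by fun_prop)
  have t2 := intervalIntegral.integral_comp_mul_deriv (a := -(π / 2)) (b := 0)
    (f := fun θ => α + β * cos θ) (f' := fun θ => β * (- sin θ))
    (g := fun x => G (x, -hh α β x)) (fun θ _ => d θ) (by fun_prop) (by fun_prop)
  simp only [cos_zero, cos_pi_div_two, mul_one, mul_zero, add_zero, cos_neg] at t1 t2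
  rw [intervalIntegral.integral_sub (Continuous.intervalIntegrable (by fun_prop) _ _)
    (Continuous.intervalIntegrable (by fun_prop) _ _), ← t2,
    intervalIntegral.integral_symm, ← t1,
    ← intervalIntegral.integral_add_adjacent_intervals (a := -(π / 2)) (b := 0) (c := π / 2)
      (Continuous.intervalIntegrable (by fun_prop) _ _)
      (Continuous.intervalIntegrable (by fun_prop) _ _), sub_eq_add_neg, add_comm,
      ← intervalIntegral.integral_neg, ← intervalIntegral.integral_neg]
  congr 1
  · apply intervalIntegral.integral_congr
    intro θ hθ
    rw [uIcc_of_le (by linarith)] at hθ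
    have hc : 0 ≤ cos θ := cos_nonneg_of_mem_Icc ⟨hθ.1, by linarith [hθ.2]⟩
    have hs : sin θ ≤ 0 := sin_nonpos_of_nonpos_of_neg_pi_le hθ.2 (by linarith [hθ.1])
    simp only [Function.comp, hh_arc hα hβ hc, abs_of_nonpos hs]
    ring_nf
  · apply intervalIntegral.integral_congr
    intro θ hθ
    rw [uIcc_of_le (by linarith)] at hθ
    have hc : 0 ≤ cos θ := cos_nonneg_of_mem_Icc ⟨by linarith [hθ.1], hθ.2⟩
    have hs : 0 ≤ sin θ := sin_nonneg_of_mem_Icc ⟨hθ.1, by linarith [hθ.2]⟩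
    simp only [Function.comp, hh_arc hα hβ hc, abs_of_nonneg hs]
    ring_nf

lemma bdry_nonneg {α β : ℝ} (hα : 0 < α) (hβ : 0 < β) (F G : ℝ × ℝ → ℝ) (hF : Continuous F)
    (hG : Continuous G)
    (h_top : ∀ x ∈ Ioo (-α) α, 0 ≤ G (x, β))
    (h_bot : ∀ x ∈ Ioo (-α) α, G (x, -β) ≤ 0)
    (h_right : ∀ θ ∈ Ioo (-(π / 2)) (π / 2), 0 ≤
      cos θ * F (α + β * cos θ, β * sin θ) + sin θ * G (α + β * cos θ, β * sin θ))
    (h_left : ∀ θ ∈ Ioo (-(π / 2)) (π / 2), 0 ≤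
      - cos θ * F (-(α + β * cos θ), β * sin θ) + sin θ * G (-(α + β * cos θ), β * sin θ)) :
    0 ≤ (∫ y in (-β)..β, (F (gg α β y, y) - F (-gg α β y, y))) +
      ∫ x in (-(α + β))..(α + β), (G (x, hh α β x) - G (x, -hh α β x)) := by
  have cg := continuous_gg α β
  have ch := continuous_hh α β
  have hp := pi_pos
  have hpp : -(π / 2) ≤ π / 2 := by linarith
  have hneg : ∀ x, hh α β (-x) = hh α β x := fun x => by unfold hh; rw [abs_neg]
  have A1 := arc_x (α := α) hβ F hF
  have A2 := arc_x (α := α) hβ (fun p => F (-p.1, p.2)) (by fun_prop)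
  have A3 := arc_y hα hβ G hG
  have A4 := arc_y hα hβ (fun p => G (-p.1, p.2)) (by fun_prop)
  have A5 : ∫ x in (-(α + β))..(-α), (G (x, hh α β x) - G (x, -hh α β x))
      = ∫ x in α..(α + β), (G (-x, hh α β x) - G (-x, -hh α β x)) := by
    rw [← intervalIntegral.integral_comp_neg]
    simp only [hneg]
  have A6 : 0 ≤ ∫ x in (-α)..α, (G (x, hh α β x) - G (x, -hh α β x)) := by
    rw [intervalIntegral.integral_of_le (by linarith), integral_Ioc_eq_integral_Ioo]
    apply setIntegral_nonneg measurableSet_Ioo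
    intro x hx
    have : hh α β x = β := by
      unfold hh
      rw [max_eq_right (by have := abs_lt.2 hx; linarith)]
      rw [zero_pow (by norm_num), sub_zero, Real.sqrt_sq hβ.le]
    rw [this]
    linarith [h_top x hx, h_bot x hx]
  have B1 : 0 ≤ (∫ θ in (-(π / 2))..(π / 2), β * (cos θ * F (α + β * cos θ, β * sin θ))) +
      ∫ θ in (-(π / 2))..(π / 2), β * (sin θ * G (α + β * cos θ, β * sin θ)) := by
    rw [← intervalIntegral.integral_add (Continuous.intervalIntegrable (by fun_prop) _ _)
      (Continuous.intervalIntegrable (by fun_prop) _ _), intervalIntegral.integral_of_le hpp,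
      integral_Ioc_eq_integral_Ioo]
    apply setIntegral_nonneg measurableSet_Ioo
    intro θ hθ
    rw [← mul_add]
    exact mul_nonneg hβ.le (h_right θ hθ)
  have B2 : 0 ≤ -(∫ θ in (-(π / 2))..(π / 2), β * (cos θ * F (-(α + β * cos θ), β * sin θ))) +
      ∫ θ in (-(π / 2))..(π / 2), β * (sin θ * G (-(α + β * cos θ), β * sin θ)) := by
    rw [← intervalIntegral.integral_neg,
      ← intervalIntegral.integral_add (Continuous.intervalIntegrable (by fun_prop) _ _)
      (Continuous.intervalIntegrable (by fun_prop) _ _), intervalIntegral.integral_of_le hpp,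
      integral_Ioc_eq_integral_Ioo]
    apply setIntegral_nonneg measurableSet_Ioo
    intro θ hθ
    have := mul_nonneg hβ.le (h_left θ hθ)
    nlinarith
  rw [intervalIntegral.integral_sub (Continuous.intervalIntegrable (by fun_prop) _ _)
    (Continuous.intervalIntegrable (by fun_prop) _ _), 
    ← intervalIntegral.integral_add_adjacent_intervals (a := -(α + β)) (b := -α) (c := α + β)
      (Continuous.intervalIntegrable (by fun_prop) _ _)
      (Continuous.intervalIntegrable (by fun_prop) _ _),
    ← intervalIntegral.integral_add_adjacent_intervals (a := -α) (b := α) (c := α + β)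
      (Continuous.intervalIntegrable (by fun_prop) _ _)
      (Continuous.intervalIntegrable (by fun_prop) _ _)]
  simp only at A2 A4
  linarith

lemma arc_mem_bd {α β : ℝ} (hα : 0 < α) (hβ : 0 < β) {θ : ℝ} (hc : 0 ≤ cos θ) :
    (α + β * cos θ, β * sin θ) ∈ StadiumBoundary α β ∧
    (-(α + β * cos θ), β * sin θ) ∈ StadiumBoundary α β := by
  have h0 : 0 ≤ β * cos θ := by positivity
  have e : |α + β * cos θ| = α + β * cos θ := abs_of_nonneg (by linarith)
  constructor <;> right
  · simp only [mem_ofPred_eq, e]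
    exact ⟨by nlinarith [sin_sq_add_cos_sq θ], by linarith⟩
  · simp only [mem_ofPred_eq, abs_neg, e]
    exact ⟨by nlinarith [sin_sq_add_cos_sq θ], by linarith⟩

lemma deriv_zero_of_zero_on {φ : ℝ → ℝ} {a b t m : ℝ} (ht : t ∈ Ioo a b)
    (h : ∀ s ∈ Ioo a b, φ s = 0) (hd : HasDerivAt φ m t) : m = 0 := by
  have : φ =ᶠ[nhds t] fun _ => 0 := by
    filter_upwards [Ioo_mem_nhds ht.1 ht.2] with s hs using h s hs
  exact hd.unique ((hasDerivAt_const t (0 : ℝ)).congr_of_eventuallyEq this)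

lemma quad_nonneg {c s a b X Y : ℝ} (h1 : c ^ 2 + s ^ 2 = 1) (ht : c * b = s * a)
    (hX : 0 ≤ c * X + s * Y) :
    0 ≤ c * (2 * (X * a + Y * b) * a - X * (a ^ 2 + b ^ 2)) +
      s * (2 * (X * a + Y * b) * b - Y * (a ^ 2 + b ^ 2)) := by
  have ha : a = c * (c * a + s * b) := by linear_combination (-a) * h1 + (-s) * ht
  have hb : b = s * (c * a + s * b) := by linear_combination (-b) * h1 + c * ht
  set g := c * a + s * b with hg
  have e : c * (2 * (X * a + Y * b) * a - X * (a ^ 2 + b ^ 2)) +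
      s * (2 * (X * a + Y * b) * b - Y * (a ^ 2 + b ^ 2)) = (c * X + s * Y) * g ^ 2 := by
    rw [ha, hb]
    linear_combination (c * X + s * Y) * g ^ 2 * h1
  rw [e]; positivity

lemma rellich {α β : ℝ} (hα : 0 < α) (hβ : 0 < β) {u ux uy uxx uxy uyy : ℝ × ℝ → ℝ}
    (J : Jet u ux uy uxx uxy uyy) (h0 : ∀ p ∈ StadiumBoundary α β, u p = 0) (lam : ℝ)
    (X Y Xx Xy Yx Yy : ℝ × ℝ → ℝ) (cX : Continuous X) (cY : Continuous Y)
    (cXx : Continuous Xx) (cXy : Continuous Xy) (cYx : Continuous Yx) (cYy : Continuous Yy)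
    (dXx : ∀ x y, HasDerivAt (fun t => X (t, y)) (Xx (x, y)) x)
    (dXy : ∀ x y, HasDerivAt (fun t => X (x, t)) (Xy (x, y)) y)
    (dYx : ∀ x y, HasDerivAt (fun t => Y (t, y)) (Yx (x, y)) x)
    (dYy : ∀ x y, HasDerivAt (fun t => Y (x, t)) (Yy (x, y)) y)
    (h_top : ∀ x ∈ Ioo (-α) α, 0 ≤ Y (x, β))
    (h_bot : ∀ x ∈ Ioo (-α) α, Y (x, -β) ≤ 0)
    (h_right : ∀ θ ∈ Ioo (-(π / 2)) (π / 2), 0 ≤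
      cos θ * X (α + β * cos θ, β * sin θ) + sin θ * Y (α + β * cos θ, β * sin θ))
    (h_left : ∀ θ ∈ Ioo (-(π / 2)) (π / 2), 0 ≤
      - cos θ * X (-(α + β * cos θ), β * sin θ) + sin θ * Y (-(α + β * cos θ), β * sin θ)) :
    0 ≤ ∫ p in Stadium α β, (2 * (Xx p * ux p ^ 2 + (Xy p + Yx p) * (ux p * uy p)
        + Yy p * uy p ^ 2)
        - (Xx p + Yy p) * (ux p ^ 2 + uy p ^ 2 - lam ^ 2 * u p ^ 2)
        - 2 * (- uxx p - uyy p - lam ^ 2 * u p) * (X p * ux p + Y p * uy p)) := by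
  have := J.cu
  have := J.cux
  have := J.cuy
  have := J.cuxx
  have := J.cuxy
  have := J.cuyy
  set F : ℝ × ℝ → ℝ := fun p => 2 * (X p * ux p + Y p * uy p) * ux p
    - X p * (ux p ^ 2 + uy p ^ 2 - lam ^ 2 * u p ^ 2) with hF
  set G : ℝ × ℝ → ℝ := fun p => 2 * (X p * ux p + Y p * uy p) * uy p
    - Y p * (ux p ^ 2 + uy p ^ 2 - lam ^ 2 * u p ^ 2) with hG
  set F' : ℝ × ℝ → ℝ := fun p => 2 * ((Xx p * ux p + X p * uxx p + (Yx p * uy p + Y p * uxy p)) * ux p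
    + (X p * ux p + Y p * uy p) * uxx p)
    - (Xx p * (ux p ^ 2 + uy p ^ 2 - lam ^ 2 * u p ^ 2)
      + X p * (2 * ux p * uxx p + 2 * uy p * uxy p - lam ^ 2 * (2 * u p * ux p))) with hF'
  set G' : ℝ × ℝ → ℝ := fun p => 2 * ((Xy p * ux p + X p * uxy p + (Yy p * uy p + Y p * uyy p)) * uy p
    + (X p * ux p + Y p * uy p) * uyy p)
    - (Yy p * (ux p ^ 2 + uy p ^ 2 - lam ^ 2 * u p ^ 2)
      + Y p * (2 * ux p * uxy p + 2 * uy p * uyy p - lam ^ 2 * (2 * u p * uy p))) with hG'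
  have cF : Continuous F := by fun_prop
  have cG : Continuous G := by fun_prop
  have cF' : Continuous F' := by fun_prop
  have cG' : Continuous G' := by fun_prop
  have dF : ∀ x y, HasDerivAt (fun t => F (t, y)) (F' (x, y)) x := by
    intro x y
    have h := (((((dXx x y).mul (J.dxx x y)).add ((dYx x y).mul (J.dyx x y))).const_mul 2).mul
      (J.dxx x y)).sub ((dXx x y).mul ((((J.dxx x y).pow 2).add ((J.dyx x y).pow 2)).sub
        (((J.dx x y).pow 2).const_mul (lam ^ 2))))
    refine h.congr_deriv ?_
    simp only [hF', Pi.mul_apply, Pi.add_apply, Pi.sub_apply, Pi.pow_apply]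
    push_cast
    ring
  have dG : ∀ x y, HasDerivAt (fun t => G (x, t)) (G' (x, y)) y := by
    intro x y
    have h := (((((dXy x y).mul (J.dxy x y)).add ((dYy x y).mul (J.dyy x y))).const_mul 2).mul
      (J.dyy x y)).sub ((dYy x y).mul ((((J.dxy x y).pow 2).add ((J.dyy x y).pow 2)).sub
        (((J.dy x y).pow 2).const_mul (lam ^ 2))))
    refine h.congr_deriv ?_
    simp only [hG', Pi.mul_apply, Pi.add_apply, Pi.sub_apply, Pi.pow_apply]
    push_cast
    ring
  have e : ∀ p, (2 * (Xx p * ux p ^ 2 + (Xy p + Yx p) * (ux p * uy p)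
        + Yy p * uy p ^ 2)
        - (Xx p + Yy p) * (ux p ^ 2 + uy p ^ 2 - lam ^ 2 * u p ^ 2)
        - 2 * (- uxx p - uyy p - lam ^ 2 * u p) * (X p * ux p + Y p * uy p)) = F' p + G' p := by
    intro p; simp only [hF', hG']; ring
  simp only [e]
  have iF : IntegrableOn F' (Stadium α β) := cF'.continuousOn.integrableOn_compact (isCompact_Stadium α β)
  have iG : IntegrableOn G' (Stadium α β) := cG'.continuousOn.integrableOn_compact (isCompact_Stadium α β)
  rw [integral_add iF iG, divx hα hβ F F' cF (fun x y _ => dF x y) iF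
    (fun y a b => Continuous.intervalIntegrable (by fun_prop) _ _), divy hα hβ G G' cG cG' dG]
  apply bdry_nonneg hα hβ F G cF cG
  · intro x hx
    have hb : ∀ t ∈ Ioo (-α) α, u (t, β) = 0 := fun t ht =>
      h0 _ (Or.inl ⟨(abs_lt.2 ht).le, Or.inl rfl⟩)
    have h1 := deriv_zero_of_zero_on hx hb (J.dx x β)
    have h2 := hb x hx
    have h3 := h_top x hx
    simp only [hG, h1, h2]
    nlinarith [mul_nonneg h3 (sq_nonneg (uy (x, β)))]
  · intro x hx
    have hb : ∀ t ∈ Ioo (-α) α, u (t, -β) = 0 := fun t ht =>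
      h0 _ (Or.inl ⟨(abs_lt.2 ht).le, Or.inr rfl⟩)
    have h1 := deriv_zero_of_zero_on hx hb (J.dx x (-β))
    have h2 := hb x hx
    have h3 := h_bot x hx
    simp only [hG, h1, h2]
    nlinarith [mul_nonneg (neg_nonneg.2 h3) (sq_nonneg (uy (x, -β)))]
  · intro θ hθ
    have hb : ∀ t ∈ Ioo (-(π / 2)) (π / 2), u (α + β * cos t, β * sin t) = 0 := fun t ht =>
      h0 _ (arc_mem_bd hα hβ (cos_pos_of_mem_Ioo ht).le).1
    have h1 := deriv_zero_of_zero_on hθ hb (J.chain _ _ _ _ θ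
      (((Real.hasDerivAt_cos θ).const_mul β).const_add α) ((Real.hasDerivAt_sin θ).const_mul β))
    have h2 := hb θ hθ
    have h3 := h_right θ hθ
    have h4 : cos θ * uy (α + β * cos θ, β * sin θ) = sin θ * ux (α + β * cos θ, β * sin θ) := by
      have : β * (cos θ * uy (α + β * cos θ, β * sin θ) - sin θ * ux (α + β * cos θ, β * sin θ)) = 0 := by
        linarith
      have := (mul_eq_zero.1 this).resolve_left hβ.ne'
      linarith
    have := quad_nonneg (cos_sq_add_sin_sq θ) h4 h3
    simp only [hF, hG, h2]
    simpa using this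
  · intro θ hθ
    have hb : ∀ t ∈ Ioo (-(π / 2)) (π / 2), u (-(α + β * cos t), β * sin t) = 0 := fun t ht =>
      h0 _ (arc_mem_bd hα hβ (cos_pos_of_mem_Ioo ht).le).2
    have h1 := deriv_zero_of_zero_on hθ hb (J.chain _ _ _ _ θ
      (((Real.hasDerivAt_cos θ).const_mul β).const_add α).neg ((Real.hasDerivAt_sin θ).const_mul β))
    have h2 := hb θ hθ
    have h3 := h_left θ hθ
    have h4 : (-cos θ) * uy (-(α + β * cos θ), β * sin θ) = sin θ * ux (-(α + β * cos θ), β * sin θ) := by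
      have : β * (cos θ * uy (-(α + β * cos θ), β * sin θ) + sin θ * ux (-(α + β * cos θ), β * sin θ)) = 0 := by
        linarith
      have := (mul_eq_zero.1 this).resolve_left hβ.ne'
      linarith
    have := quad_nonneg (by rw [neg_sq]; exact cos_sq_add_sin_sq θ) h4 h3
    simp only [hF, hG, h2]
    simpa using this

lemma ci {α β : ℝ} {g : ℝ × ℝ → ℝ} (h : Continuous g) : IntegrableOn g (Stadium α β) :=
  h.continuousOn.integrableOn_compact (isCompact_Stadium α β)

def chi (α x : ℝ) : ℝ := if α < x then 1 else 0

lemma measurable_chi (α : ℝ) : Measurable (chi α) :=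
  Measurable.ite measurableSet_Ioi measurable_const measurable_const

lemma chi_bound (α x : ℝ) : ‖chi α x‖ ≤ 1 := by
  unfold chi; split_ifs <;> simp

lemma ci_chi {α β : ℝ} {g : ℝ × ℝ → ℝ} (h : Continuous g) :
    IntegrableOn (fun p => chi α p.1 * g p) (Stadium α β) :=
  (ci h).bdd_mul (c := 1) ((measurable_chi α).comp measurable_fst).aestronglyMeasurable
    (Filter.Eventually.of_forall fun p => chi_bound α p.1)

lemma ii_chi (α a b : ℝ) : IntervalIntegrable (chi α) volume a b := by
  rw [intervalIntegrable_iff]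
  exact Measure.integrableOn_of_bounded (M := 1) (by simp) (measurable_chi α).aestronglyMeasurable
    (Filter.Eventually.of_forall fun p => chi_bound α p)

lemma hasDerivAt_max_pow (α : ℝ) (n : ℕ) (x : ℝ) :
    HasDerivAt (fun t => (max (t - α) 0) ^ (n + 2)) ((n + 2) * (max (x - α) 0) ^ (n + 1)) x := by
  rcases lt_trichotomy x α with h | h | h
  · rw [max_eq_right (by linarith)]
    have : (fun t => (max (t - α) 0) ^ (n + 2)) =ᶠ[nhds x] fun _ => 0 := by
      filter_upwards [Iio_mem_nhds h] with t ht
      rw [max_eq_right (by linarith [mem_Iio.1 ht])]; simp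
    simpa using (hasDerivAt_const x (0 : ℝ)).congr_of_eventuallyEq this
  · subst h
    have hb : (fun t => (max (t - x) 0) ^ (n + 2)) =O[nhds x] fun t => ‖t - x‖ ^ (n + 2) := by
      apply Asymptotics.IsBigO.of_bound 1
      refine Filter.Eventually.of_forall fun t => ?_
      simp only [norm_pow, norm_norm, one_mul]
      gcongr
      rw [Real.norm_eq_abs, Real.norm_eq_abs, abs_of_nonneg (le_max_right _ _)]
      exact max_le (le_abs_self _) (abs_nonneg _)
    have := (hb.hasFDerivAt (𝕜 := ℝ) (by omega)).hasDerivAt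
    simpa using this
  · rw [max_eq_left (by linarith)]
    have : (fun t => (max (t - α) 0) ^ (n + 2)) =ᶠ[nhds x] fun t => (t - α) ^ (n + 2) := by
      filter_upwards [Ioi_mem_nhds h] with t ht
      rw [max_eq_left (by linarith [mem_Ioi.1 ht])]
    refine HasDerivAt.congr_of_eventuallyEq ?_ this
    have := ((hasDerivAt_id' x).sub_const α).pow (n + 2)
    refine this.congr_deriv ?_
    push_cast
    simp

lemma hasDerivAt_max (α : ℝ) (x : ℝ) (hx : x ≠ α) :
    HasDerivAt (fun t => max (t - α) 0) (chi α x) x := by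
  rcases lt_or_gt_of_ne hx with h | h
  · have : (fun t => max (t - α) 0) =ᶠ[nhds x] fun _ => 0 := by
      filter_upwards [Iio_mem_nhds h] with t ht
      rw [max_eq_right (by linarith [mem_Iio.1 ht])]
    have e : chi α x = 0 := by unfold chi; rw [if_neg (by linarith)]
    rw [e]
    exact (hasDerivAt_const x (0 : ℝ)).congr_of_eventuallyEq this
  · have : (fun t => max (t - α) 0) =ᶠ[nhds x] fun t => t - α := by
      filter_upwards [Ioi_mem_nhds h] with t ht
      rw [max_eq_left (by linarith [mem_Ioi.1 ht])]
    have e : chi α x = 1 := by unfold chi; rw [if_pos h]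
    rw [e]
    exact ((hasDerivAt_id' x).sub_const α).congr_of_eventuallyEq this

lemma cs {α β : ℝ} (a b : ℝ × ℝ → ℝ) (h1 : IntegrableOn (fun p => a p ^ 2) (Stadium α β))
    (h2 : IntegrableOn (fun p => b p ^ 2) (Stadium α β))
    (h3 : IntegrableOn (fun p => a p * b p) (Stadium α β)) :
    |∫ p in Stadium α β, a p * b p|
      ≤ √(∫ p in Stadium α β, a p ^ 2) * √(∫ p in Stadium α β, b p ^ 2) := by
  rw [← Real.sqrt_mul (integral_nonneg fun p => sq_nonneg _)]
  apply Real.abs_le_sqrt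
  have key : ∀ t : ℝ, 0 ≤ (∫ p in Stadium α β, b p ^ 2) * (t * t)
      + (2 * ∫ p in Stadium α β, a p * b p) * t + ∫ p in Stadium α β, a p ^ 2 := by
    intro t
    have : 0 ≤ ∫ p in Stadium α β, (a p + t * b p) ^ 2 := integral_nonneg fun p => sq_nonneg _
    have e : ∫ p in Stadium α β, (a p + t * b p) ^ 2
        = ∫ p in Stadium α β, (a p ^ 2 + (2 * t) * (a p * b p) + t ^ 2 * b p ^ 2) := by
      congr 1; ext p; ring
    have h13 : IntegrableOn (fun p => a p ^ 2 + (2 * t) * (a p * b p)) (Stadium α β) :=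
      h1.add (h3.const_mul _)
    rw [e, integral_add h13 (h2.const_mul _),
      integral_add h1 (h3.const_mul _), integral_const_mul, integral_const_mul] at this
    linarith
  have := discrim_le_zero key
  unfold discrim at this
  nlinarith

lemma energyW {α β : ℝ} (hα : 0 < α) (hβ : 0 < β) {u ux uy uxx uxy uyy : ℝ × ℝ → ℝ}
    (J : Jet u ux uy uxx uxy uyy) (h0 : ∀ p ∈ StadiumBoundary α β, u p = 0) (lam : ℝ)
    (r r' : ℝ → ℝ) (cr : Continuous r) (dr : ∀ x, x ≠ α → HasDerivAt r (r' x) x)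
    (ir : ∀ a b, IntervalIntegrable r' volume a b)
    (ig : ∀ g : ℝ × ℝ → ℝ, Continuous g → IntegrableOn (fun p => r' p.1 * g p) (Stadium α β)) :
    ∫ p in Stadium α β, r p.1 * (ux p ^ 2 + uy p ^ 2)
      = lam ^ 2 * (∫ p in Stadium α β, r p.1 * u p ^ 2)
        + (∫ p in Stadium α β, r p.1 * ((- uxx p - uyy p - lam ^ 2 * u p) * u p))
        - ∫ p in Stadium α β, r' p.1 * (u p * ux p) := by
  have := J.cu
  have := J.cux
  have := J.cuy
  have := J.cuxx
  have := J.cuxy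
  have := J.cuyy
  have hx := divx_zero hα hβ (fun p => r p.1 * (u p * ux p))
    (fun p => r' p.1 * (u p * ux p) + r p.1 * (ux p ^ 2 + u p * uxx p)) (by fun_prop)
    (fun x y hxx => by
      have h := (dr x hxx).mul ((J.dx x y).mul (J.dxx x y))
      refine h.congr_deriv ?_
      simp only [Pi.mul_apply]
      ring)
    ((ig _ (by fun_prop)).add (ci (by fun_prop)))
    (fun y a b => ((ir a b).mul_continuousOn (g := fun t => u (t, y) * ux (t, y))
      (by fun_prop)).add (Continuous.intervalIntegrable (by fun_prop) _ _))
    (fun p hp => by simp [h0 p hp])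
  have hy := divy_zero hα hβ (fun p => r p.1 * (u p * uy p))
    (fun p => r p.1 * (uy p ^ 2 + u p * uyy p)) (by fun_prop) (by fun_prop)
    (fun x y => by
      have h := ((J.dy x y).mul (J.dyy x y)).const_mul (r x)
      refine h.congr_deriv ?_
      ring)
    (fun p hp => by simp [h0 p hp])
  rw [integral_add (ig _ (by fun_prop)) (ci (by fun_prop))] at hx
  have e : ∫ p in Stadium α β, r p.1 * (ux p ^ 2 + uy p ^ 2)
      = ∫ p in Stadium α β, ((r p.1 * (ux p ^ 2 + u p * uxx p) + r p.1 * (uy p ^ 2 + u p * uyy p))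
        + (lam ^ 2 * (r p.1 * u p ^ 2) + r p.1 * ((- uxx p - uyy p - lam ^ 2 * u p) * u p))) := by
    congr 1; ext p; ring
  rw [e, integral_add (ci (by fun_prop)) (ci (by fun_prop)), integral_add (ci (by fun_prop)) (ci (by fun_prop)),
    integral_add (ci (by fun_prop)) (ci (by fun_prop)), integral_const_mul]
  linarith

lemma poinc {α β : ℝ} (hα : 0 < α) (hβ : 0 < β) {u ux uy uxx uxy uyy : ℝ × ℝ → ℝ}
    (J : Jet u ux uy uxx uxy uyy) (h0 : ∀ p ∈ StadiumBoundary α β, u p = 0) :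
    ∫ p in Stadium α β, u p ^ 2 ≤ 4 * (α + β) ^ 2 * ∫ p in Stadium α β, ux p ^ 2 := by
  have := J.cu
  have := J.cux
  have hx := divx_zero' hα hβ (fun p => p.1 * u p ^ 2)
    (fun p => u p ^ 2 + 2 * p.1 * u p * ux p) (by fun_prop) (by fun_prop)
    (fun x y => by
      have h := (hasDerivAt_id' x).mul ((J.dx x y).pow 2)
      refine h.congr_deriv ?_
      simp only [Pi.pow_apply]
      push_cast
      ring)
    (fun p hp => by simp [h0 p hp])
  have hm : ∫ p in Stadium α β, (1 / 2 * u p ^ 2 - 2 * (α + β) ^ 2 * ux p ^ 2)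
      ≤ ∫ p in Stadium α β, (u p ^ 2 + 2 * p.1 * u p * ux p) := by
    apply setIntegral_mono_on (ci (by fun_prop)) (ci (by fun_prop))
      (isCompact_Stadium α β).measurableSet
    rintro ⟨x, y⟩ hp
    obtain ⟨⟨h1, h2⟩, -⟩ := (mem_S_y hα hβ x y).1 hp
    have : x ^ 2 ≤ (α + β) ^ 2 := by nlinarith
    simp only
    nlinarith [sq_nonneg (u (x, y) + 2 * x * ux (x, y)),
      mul_le_mul_of_nonneg_right this (sq_nonneg (ux (x, y)))]
  rw [hx, integral_sub (ci (by fun_prop)) (ci (by fun_prop)), integral_const_mul,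
    integral_const_mul] at hm
  linarith

lemma main_ineq {α β : ℝ} (hα : 0 < α) (hβ : 0 < β) {u ux uy uxx uxy uyy : ℝ × ℝ → ℝ}
    (J : Jet u ux uy uxx uxy uyy) (h0 : ∀ p ∈ StadiumBoundary α β, u p = 0) (lam : ℝ)
    (f : ℝ × ℝ → ℝ) (hf : ∀ p, f p = - uxx p - uyy p - lam ^ 2 * u p)
    (m k : ℝ) (hm : 0 < m) (hk : 0 < k) (hmk : (α + β) ^ 2 = m * k * β ^ 4) :
    2 * (∫ p in Stadium α β, ux p ^ 2) ≤
      ((∫ p in Stadium α β, (ux p ^ 2 + uy p ^ 2)) - lam ^ 2 * ∫ p in Stadium α β, u p ^ 2)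
      + 2 * (∫ p in Stadium α β, f p * ((p.1 + (α + β)) * ux p))
      - 2 * m * (∫ p in Stadium α β, f p * (p.1 * ux p + p.2 * uy p))
      + 2 * m * lam ^ 2 * (∫ p in Stadium α β, u p ^ 2)
      + k * (4 * (α + β) * (∫ p in Stadium α β, max (p.1 - α) 0 * (ux p ^ 2 + uy p ^ 2))
        + 4 * lam ^ 2 * (α + β) ^ 2 * (∫ p in Stadium α β, chi α p.1 * u p ^ 2)
        - 2 * ∫ p in Stadium α β, f p *
          ((max (p.1 - α) 0) ^ 2 * (max (p.1 - α) 0 * ux p + p.2 * uy p))) := by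
  have := J.cu
  have := J.cux
  have := J.cuy
  have := J.cuxx
  have := J.cuxy
  have := J.cuyy
  have cf : Continuous f := by
    have : f = fun p => - uxx p - uyy p - lam ^ 2 * u p := funext hf
    rw [this]; fun_prop
  have R := rellich hα hβ J h0 lam
    (fun p => -(p.1 + (α + β)) + m * p.1 + k * (max (p.1 - α) 0) ^ 3)
    (fun p => m * p.2 + k * (max (p.1 - α) 0) ^ 2 * p.2)
    (fun p => -1 + m + k * (3 * (max (p.1 - α) 0) ^ 2))
    (fun _ => 0)
    (fun p => k * (2 * max (p.1 - α) 0) * p.2)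
    (fun p => m + k * (max (p.1 - α) 0) ^ 2)
    (by fun_prop) (by fun_prop) (by fun_prop) (by fun_prop) (by fun_prop) (by fun_prop)
    (fun x y => by
      have h := ((((hasDerivAt_id' x).add_const (α + β)).neg).add
        ((hasDerivAt_id' x).const_mul m)).add ((hasDerivAt_max_pow α 1 x).const_mul k)
      refine h.congr_deriv ?_
      push_cast
      ring)
    (fun x y => hasDerivAt_const y (-(x + (α + β)) + m * x + k * (max (x - α) 0) ^ 3))
    (fun x y => by
      have h := ((((hasDerivAt_max_pow α 0 x).const_mul k)).mul_const y).const_add (m * y)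
      refine h.congr_deriv ?_
      push_cast
      ring)
    (fun x y => by
      have h := ((hasDerivAt_id' y).const_mul m).add
        ((hasDerivAt_id' y).const_mul (k * (max (x - α) 0) ^ 2))
      refine h.congr_deriv ?_
      ring)
    (fun x hx => by
      simp only
      rw [max_eq_right (by linarith [hx.2])]
      nlinarith [mul_pos hm hβ])
    (fun x hx => by
      simp only
      rw [max_eq_right (by linarith [hx.2])]
      nlinarith [mul_pos hm hβ])
    (fun θ hθ => by
      have hc := cos_pos_of_mem_Ioo hθ
      have hc1 := cos_le_one θ
      have hs : max (α + β * cos θ - α) 0 = β * cos θ := by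
        rw [add_sub_cancel_left]; exact max_eq_left (by positivity)
      simp only [hs]
      have e : cos θ * (-(α + β * cos θ + (α + β)) + m * (α + β * cos θ) + k * (β * cos θ) ^ 3)
          + sin θ * (m * (β * sin θ) + k * (β * cos θ) ^ 2 * (β * sin θ))
          = β * cos θ * (1 - cos θ) + m * α * cos θ
            + (m * β + k * β ^ 3 * cos θ ^ 2 - 2 * (α + β) * cos θ) := by
        have := sin_sq_add_cos_sq θ
        linear_combination (m * β + k * β ^ 3 * cos θ ^ 2) * this
      rw [e]
      have h1 : 0 ≤ β * cos θ * (1 - cos θ) :=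
        mul_nonneg (by positivity) (by linarith)
      have h2 : 0 ≤ m * α * cos θ := by positivity
      have h3 : 0 ≤ m * β + k * β ^ 3 * cos θ ^ 2 - 2 * (α + β) * cos θ := by
        have hmb : 0 < m * β := by positivity
        have : 0 ≤ (m * β) * (m * β + k * β ^ 3 * cos θ ^ 2 - 2 * (α + β) * cos θ) := by
          have e2 : (m * β) * (m * β + k * β ^ 3 * cos θ ^ 2 - 2 * (α + β) * cos θ)
              = (m * β - (α + β) * cos θ) ^ 2 := by
            linear_combination (- cos θ ^ 2) * hmk
          rw [e2]; positivity
        exact nonneg_of_mul_nonneg_right this hmb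
      linarith)
    (fun θ hθ => by
      have hc := cos_pos_of_mem_Ioo hθ
      have hc1 := cos_le_one θ
      have hbc : 0 < β * cos θ := by positivity
      have hs : max (-(α + β * cos θ) - α) 0 = 0 := max_eq_right (by linarith)
      simp only [hs]
      have e : -cos θ * (-(-(α + β * cos θ) + (α + β)) + m * -(α + β * cos θ) + k * 0 ^ 3)
          + sin θ * (m * (β * sin θ) + k * 0 ^ 2 * (β * sin θ))
          = β * cos θ * (1 - cos θ) + m * α * cos θ + m * β := by
        have := sin_sq_add_cos_sq θ
        linear_combination (m * β) * this
      rw [e]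
      have h1 : 0 ≤ β * cos θ * (1 - cos θ) :=
        mul_nonneg (by positivity) (by linarith)
      positivity)
  have ic : ∀ c : ℝ, IntegrableOn (fun p => c * (chi α p.1 * u p ^ 2)) (Stadium α β) :=
    fun c => (ci_chi (by fun_prop)).const_mul c
  have M : (0:ℝ) ≤ ∫ p in Stadium α β, ((-2 * ux p ^ 2 + (ux p ^ 2 + uy p ^ 2)
      + (- lam ^ 2 + 2 * m * lam ^ 2) * u p ^ 2
      + 2 * (f p * ((p.1 + (α + β)) * ux p))
      + (- (2 * m)) * (f p * (p.1 * ux p + p.2 * uy p))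
      + k * (4 * (α + β)) * (max (p.1 - α) 0 * (ux p ^ 2 + uy p ^ 2))
      + (- 2 * k) * (f p * ((max (p.1 - α) 0) ^ 2 * (max (p.1 - α) 0 * ux p + p.2 * uy p))))
      + (k * (4 * lam ^ 2 * (α + β) ^ 2)) * (chi α p.1 * u p ^ 2)) := by
    refine le_trans R (setIntegral_mono_on (ci (by fun_prop)) ((ci (by fun_prop)).add (ic _))
      (isCompact_Stadium α β).measurableSet ?_)
    rintro ⟨x, y⟩ hp
    obtain ⟨⟨hx1, hx2⟩, -⟩ := (mem_S_y hα hβ x y).1 hp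
    obtain ⟨⟨hy1, hy2⟩, -⟩ := (mem_S_x hα hβ x y).1 hp
    simp only
    rw [← hf]
    set s := max (x - α) 0 with hs
    have s0 : 0 ≤ s := le_max_right _ _
    have s1 : s ≤ α + β := max_le (by linarith) (by linarith)
    have hchi : s ^ 2 * u (x, y) ^ 2 ≤ (α + β) ^ 2 * (chi α x * u (x, y) ^ 2) := by
      unfold chi
      split_ifs with h
      · rw [one_mul]; gcongr
      · rw [hs, max_eq_right (by linarith)]; simp
    generalize chi α x * u (x, y) ^ 2 = C at *
    generalize u (x, y) = U at *
    generalize f (x, y) = f at *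
    generalize ux (x, y) = a at *
    generalize uy (x, y) = b at *
    have t1 : s * (s * (a ^ 2 - b ^ 2)) ≤ s * ((α + β) * (a ^ 2 + b ^ 2)) := by
      apply mul_le_mul_of_nonneg_left _ s0
      nlinarith [sq_nonneg a, sq_nonneg b]
    have t2 : s * (2 * (y * (a * b))) ≤ s * ((α + β) * (a ^ 2 + b ^ 2)) := by
      apply mul_le_mul_of_nonneg_left _ s0
      have ab : |y| ≤ α + β := abs_le.2 ⟨by linarith, by linarith⟩
      calc 2 * (y * (a * b)) ≤ |2 * (y * (a * b))| := le_abs_self _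
        _ = |y| * (2 * |a| * |b|) := by rw [abs_mul, abs_mul, abs_mul, abs_two]; ring
        _ ≤ (α + β) * (a ^ 2 + b ^ 2) := by
          apply mul_le_mul ab _ (by positivity) (by positivity)
          rw [← sq_abs a, ← sq_abs b]; nlinarith [sq_nonneg (|a| - |b|)]
    have t3 : lam ^ 2 * (s ^ 2 * U ^ 2) ≤ lam ^ 2 * ((α + β) ^ 2 * C) := by gcongr
    have t4 := mul_le_mul_of_nonneg_left (add_le_add (add_le_add t1 t2) (add_le_add t3 t3)) hk.le
    nlinarith [t4]
  have Q := M
  rw [integral_add (ci (by fun_prop)) (ic _), integral_add (ci (by fun_prop)) (ci (by fun_prop)),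
    integral_add (ci (by fun_prop)) (ci (by fun_prop)), integral_add (ci (by fun_prop)) (ci (by fun_prop)),
    integral_add (ci (by fun_prop)) (ci (by fun_prop)), integral_add (ci (by fun_prop)) (ci (by fun_prop)),
    integral_add (ci (by fun_prop)) (ci (by fun_prop)),
    integral_const_mul, integral_const_mul, integral_const_mul, integral_const_mul,
    integral_const_mul, integral_const_mul, integral_const_mul] at Q
  linarith

lemma sqrt_int_le {α β : ℝ} {a b : ℝ × ℝ → ℝ} {c : ℝ} (hc : 0 ≤ c)
    (ia : IntegrableOn (fun p => a p ^ 2) (Stadium α β)) (ib : IntegrableOn b (Stadium α β))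
    (h : ∀ p ∈ Stadium α β, a p ^ 2 ≤ c ^ 2 * b p) :
    √(∫ p in Stadium α β, a p ^ 2) ≤ c * √(∫ p in Stadium α β, b p) := by
  have h1 : ∫ p in Stadium α β, a p ^ 2 ≤ c ^ 2 * ∫ p in Stadium α β, b p := by
    rw [← integral_const_mul]
    exact setIntegral_mono_on ia (ib.const_mul _) (isCompact_Stadium α β).measurableSet h
  calc √(∫ p in Stadium α β, a p ^ 2) ≤ √(c ^ 2 * ∫ p in Stadium α β, b p) := Real.sqrt_le_sqrt h1
    _ = c * √(∫ p in Stadium α β, b p) := by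
      rw [Real.sqrt_mul (sq_nonneg c), Real.sqrt_sq hc]

set_option maxHeartbeats 1000000 in
lemma real_part {L e K A D G1 G2 w nu lam q0 Q1 Q2 Q3 : ℝ} (hL : 0 < L) (he : 0 < e) (hK : 0 < K)
    (hlam : 1 ≤ lam) (hnu0 : 0 ≤ nu) (hnu : nu ≤ 1) (hA0 : 0 ≤ A) (hAD : A ≤ D)
    (hw0 : 0 ≤ w) (hw : w ≤ (1 / lam) ^ 4)
    (hD : D = lam ^ 2 + q0) (hq0 : |q0| ≤ nu)
    (hG1 : G1 ≤ lam ^ 2 * (L * w ^ 2) + nu * (L * w) + w * √A)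
    (hG2 : G2 ≤ 2 * (lam ^ 2 * (L ^ 2 * w ^ 2) + nu * (L ^ 2 * w) + 2 * w ^ 2))
    (hQ1 : |Q1| ≤ nu * (2 * L * √A)) (hQ2 : |Q2| ≤ nu * (2 * L * √D))
    (hQ3 : |Q3| ≤ nu * (2 * L ^ 2 * √G2))
    (hm : 2 * A ≤ q0 + 2 * Q1 - 2 * (e * (1 / lam) ^ 2) * Q2 + 2 * (e * (1 / lam) ^ 2) * lam ^ 2
      + K * lam ^ 2 * (4 * L * G1 + 4 * lam ^ 2 * L ^ 2 * w ^ 2 - 2 * Q3)) :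
    A ≤ 2 * e + (1 + 4 * L ^ 2 + 8 * L * e + K * (4 * L * (2 * L + 2) + 4 * L ^ 2
      + 4 * L ^ 2 * (2 * L + 2))) * (nu + 1 / lam) := by
  have lpos : 0 < lam := by linarith
  set i := 1 / lam with hi
  have li : lam * i = 1 := by rw [hi]; field_simp
  have i0 : 0 < i := by positivity
  have i1 : i ≤ 1 := by rw [hi, div_le_one lpos]; exact hlam
  have hq := abs_le.1 hq0
  have sD : √D ≤ 2 * lam := by
    apply Real.sqrt_le_iff.2 ⟨by linarith, by nlinarith⟩
  have sA : √A ≤ 2 * lam := (Real.sqrt_le_sqrt hAD).trans sD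
  have sA0 := Real.sqrt_nonneg A
  have sA2 := Real.sq_sqrt hA0
  have hw2 : w ^ 2 ≤ i ^ 8 := by
    calc w ^ 2 ≤ (i ^ 4) ^ 2 := by gcongr
      _ = i ^ 8 := by ring
  have p6 : i ^ 6 ≤ i ^ 3 := pow_le_pow_of_le_one i0.le i1 (by norm_num)
  have p43 : i ^ 4 ≤ i ^ 3 := pow_le_pow_of_le_one i0.le i1 (by norm_num)
  have p64 : i ^ 6 ≤ i ^ 4 := pow_le_pow_of_le_one i0.le i1 (by norm_num)
  have p84 : i ^ 8 ≤ i ^ 4 := pow_le_pow_of_le_one i0.le i1 (by norm_num)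
  have lw2 : lam ^ 2 * w ^ 2 ≤ i ^ 6 := by
    calc lam ^ 2 * w ^ 2 ≤ lam ^ 2 * i ^ 8 := by gcongr
      _ = (lam * i) ^ 2 * i ^ 6 := by ring
      _ = i ^ 6 := by rw [li]; ring
  have nw : nu * w ≤ i ^ 4 := by
    calc nu * w ≤ 1 * i ^ 4 := by gcongr
      _ = i ^ 4 := by ring
  have wA : w * √A ≤ 2 * i ^ 3 := by
    calc w * √A ≤ i ^ 4 * (2 * lam) := by gcongr
      _ = 2 * (lam * i) * i ^ 3 := by ring
      _ = 2 * i ^ 3 := by rw [li]; ring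
  have g1 : G1 ≤ (2 * L + 2) * i ^ 3 := by
    have a1 := mul_le_mul_of_nonneg_left (lw2.trans p6) hL.le
    have a2 := mul_le_mul_of_nonneg_left (nw.trans p43) hL.le
    linarith
  have g2 : √G2 ≤ (2 * L + 2) * i ^ 2 := by
    apply Real.sqrt_le_iff.2 ⟨by positivity, ?_⟩
    have a1 := mul_le_mul_of_nonneg_left (lw2.trans p64) (sq_nonneg L)
    have a2 := mul_le_mul_of_nonneg_left nw (sq_nonneg L)
    have a3 : 0 ≤ 8 * (L * i ^ 4) := by positivity
    have e2 : ((2 * L + 2) * i ^ 2) ^ 2 = 4 * (L ^ 2 * i ^ 4) + 8 * (L * i ^ 4) + 4 * i ^ 4 := by ring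
    have a4 := hw2.trans p84
    rw [e2]
    linarith
  have q1 : 2 * Q1 ≤ A + 4 * L ^ 2 * nu := by
    have a1 := (abs_le.1 hQ1).2
    have a2 : nu ^ 2 ≤ nu := by nlinarith
    have a3 := mul_le_mul_of_nonneg_left a2 (sq_nonneg L)
    nlinarith [sq_nonneg (√A - 2 * L * nu)]
  have q2 : - (2 * (e * i ^ 2) * Q2) ≤ 8 * L * e * nu := by
    have a1 : - Q2 ≤ nu * (2 * L * (2 * lam)) := by
      have : nu * (2 * L * √D) ≤ nu * (2 * L * (2 * lam)) := by gcongr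
      linarith [(abs_le.1 hQ2).1]
    calc - (2 * (e * i ^ 2) * Q2) = 2 * (e * i ^ 2) * (- Q2) := by ring
      _ ≤ 2 * (e * i ^ 2) * (nu * (2 * L * (2 * lam))) := by gcongr
      _ = 8 * L * e * nu * (lam * i) * i := by ring
      _ = 8 * L * e * nu * i := by rw [li]; ring
      _ ≤ 8 * L * e * nu * 1 := by gcongr
      _ = _ := by ring
  have q3 : - (2 * Q3) ≤ 4 * L ^ 2 * (2 * L + 2) * nu * i ^ 2 := by
    have : nu * (2 * L ^ 2 * √G2) ≤ nu * (2 * L ^ 2 * ((2 * L + 2) * i ^ 2)) := by gcongr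
    linarith [(abs_le.1 hQ3).1]
  have ee : 2 * (e * i ^ 2) * lam ^ 2 = 2 * e := by
    calc 2 * (e * i ^ 2) * lam ^ 2 = 2 * e * (lam * i) ^ 2 := by ring
      _ = 2 * e := by rw [li]; ring
  have br : K * lam ^ 2 * (4 * L * G1 + 4 * lam ^ 2 * L ^ 2 * w ^ 2 - 2 * Q3)
      ≤ K * (4 * L * (2 * L + 2) * i + 4 * L ^ 2 * i + 4 * L ^ 2 * (2 * L + 2) * nu) := by
    have a1 := mul_le_mul_of_nonneg_left g1 (by positivity : (0 : ℝ) ≤ 4 * L)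
    have a2 := mul_le_mul_of_nonneg_left (lw2.trans p6) (by positivity : (0 : ℝ) ≤ 4 * L ^ 2)
    calc K * lam ^ 2 * (4 * L * G1 + 4 * lam ^ 2 * L ^ 2 * w ^ 2 - 2 * Q3)
        ≤ K * lam ^ 2 * (4 * L * ((2 * L + 2) * i ^ 3) + 4 * L ^ 2 * i ^ 3
          + 4 * L ^ 2 * (2 * L + 2) * nu * i ^ 2) := by
          apply mul_le_mul_of_nonneg_left _ (by positivity)
          linarith
      _ = K * (lam * i) ^ 2 * (4 * L * (2 * L + 2) * i + 4 * L ^ 2 * i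
          + 4 * L ^ 2 * (2 * L + 2) * nu) := by ring
      _ = _ := by rw [li]; ring
  have b1 : 0 ≤ 4 * L ^ 2 * i := by positivity
  have b2 : 0 ≤ 8 * L * e * i := by positivity
  have b3 : 0 ≤ K * ((4 * L * (2 * L + 2) + 4 * L ^ 2) * nu + 4 * L ^ 2 * (2 * L + 2) * i) := by
    positivity
  rw [ee] at hm
  linarith

set_option maxHeartbeats 2000000 in
lemma core {α β : ℝ} (hα : 0 < α) (hβ : 0 < β) (e : ℝ) (he : 0 < e) :
    ∃ M > 0, ∀ {u ux uy uxx uxy uyy : ℝ × ℝ → ℝ}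
    (_ : Jet u ux uy uxx uxy uyy) (_ : ∀ p ∈ StadiumBoundary α β, u p = 0) (lam : ℝ) (_ : 1 ≤ lam)
    (f : ℝ × ℝ → ℝ) (_ : ∀ p, f p = - uxx p - uyy p - lam ^ 2 * u p)
    (_ : √(∫ p in Stadium α β, f p ^ 2) ≤ 1)
    (_ : (∫ p in Stadium α β, u p ^ 2) = 1)
    (_ : √(∫ p in Stadium α β, chi α p.1 * u p ^ 2) ≤ (1 / lam) ^ 4),
    1 / (4 * (α + β) ^ 2) ≤ 2 * e + M * (√(∫ p in Stadium α β, f p ^ 2) + 1 / lam) := by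
  set L := α + β with hL
  have L0 : 0 < L := by positivity
  set K := L ^ 2 / (e * β ^ 4) with hK
  have K0 : 0 < K := by positivity
  refine ⟨1 + 4 * L ^ 2 + 8 * L * e + K * (4 * L * (2 * L + 2) + 4 * L ^ 2
      + 4 * L ^ 2 * (2 * L + 2)), by positivity, ?_⟩
  intro u ux uy uxx uxy uyy J h0 lam hlam f hf hnu hu hw
  have := J.cu
  have := J.cux
  have := J.cuy
  have := J.cuxx
  have := J.cuxy
  have := J.cuyy
  have cf : Continuous f := by
    have : f = fun p => - uxx p - uyy p - lam ^ 2 * u p := funext hf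
    rw [this]; fun_prop
  have lpos : 0 < lam := by linarith
  have hS := (isCompact_Stadium α β).measurableSet
  have P := poinc hα hβ J h0
  rw [hu, ← hL] at P
  have bS : ∀ p ∈ Stadium α β, |p.1| ≤ L ∧ |p.2| ≤ L ∧ 0 ≤ max (p.1 - α) 0 ∧ max (p.1 - α) 0 ≤ L := by
    rintro ⟨x, y⟩ hp
    obtain ⟨⟨hx1, hx2⟩, -⟩ := (mem_S_y hα hβ x y).1 hp
    obtain ⟨⟨hy1, hy2⟩, -⟩ := (mem_S_x hα hβ x y).1 hp
    refine ⟨abs_le.2 ⟨hx1, hx2⟩, abs_le.2 ⟨by simp only; linarith, by simp only; linarith⟩,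
      le_max_right _ _, max_le (by simp only; linarith) (by linarith)⟩
  have ichi : IntegrableOn (fun p => chi α p.1 * u p ^ 2) (Stadium α β) := ci_chi (by fun_prop)
  have chi0 : ∀ p : ℝ × ℝ, 0 ≤ chi α p.1 * u p ^ 2 := by
    intro p; unfold chi; split_ifs
    · positivity
    · simp
  have chisq : ∀ p : ℝ × ℝ, (chi α p.1 * u p) ^ 2 = chi α p.1 * u p ^ 2 := by
    intro p; unfold chi; split_ifs
    · ring
    · simp
  have schi : ∀ p : ℝ × ℝ, max (p.1 - α) 0 = max (p.1 - α) 0 * chi α p.1 := by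
    intro p; unfold chi; split_ifs with h
    · ring
    · rw [max_eq_right (by linarith)]; simp
  set w := √(∫ p in Stadium α β, chi α p.1 * u p ^ 2) with hwdef
  have hw2 : w ^ 2 = ∫ p in Stadium α β, chi α p.1 * u p ^ 2 :=
    Real.sq_sqrt (integral_nonneg chi0)
  set nu := √(∫ p in Stadium α β, f p ^ 2) with hnudef
  set A := ∫ p in Stadium α β, ux p ^ 2 with hA
  set D := ∫ p in Stadium α β, (ux p ^ 2 + uy p ^ 2) with hD
  have csf : ∀ b : ℝ × ℝ → ℝ, Continuous b → |∫ p in Stadium α β, f p * b p|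
      ≤ nu * √(∫ p in Stadium α β, b p ^ 2) := fun b hb =>
    cs f b (ci (by fun_prop)) (ci (by fun_prop)) (ci (by fun_prop))
  have E0 := energyW hα hβ J h0 lam (fun _ => 1) (fun _ => 0) continuous_const
    (fun x _ => hasDerivAt_const x 1) (fun a b => by simp) (fun g _ => by simp)
  have E1 := energyW hα hβ J h0 lam (fun x => max (x - α) 0) (chi α) (by fun_prop)
    (hasDerivAt_max α) (ii_chi α) (fun g hg => ci_chi hg)
  have E2 := energyW hα hβ J h0 lam (fun x => (max (x - α) 0) ^ 2) (fun x => 2 * max (x - α) 0)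
    (by fun_prop) (fun x _ => by simpa using hasDerivAt_max_pow α 0 x)
    (fun a b => Continuous.intervalIntegrable (by fun_prop) _ _) (fun g hg => ci (by fun_prop))
  simp only [← hf] at E0 E1 E2
  simp only [one_mul, zero_mul, integral_zero, sub_zero, hu, mul_one] at E0
  have hAD : A ≤ D := setIntegral_mono_on (ci (by fun_prop)) (ci (by fun_prop)) hS
    (fun p _ => by nlinarith [sq_nonneg (uy p)])
  have hm := main_ineq hα hβ J h0 lam f hf (e * (1 / lam) ^ 2) (K * lam ^ 2) (by positivity)
    (by positivity) (by rw [hK, ← hL]; field_simp)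
  rw [← hL, hu, ← hw2] at hm
  have hA0 : 0 ≤ A := integral_nonneg fun p => sq_nonneg _
  have s1 : ∫ p in Stadium α β, max (p.1 - α) 0 * u p ^ 2 ≤ L * w ^ 2 := by
    rw [hw2, ← integral_const_mul]
    refine setIntegral_mono_on (ci (by fun_prop)) (ichi.const_mul _) hS fun p hp => ?_
    obtain ⟨-, -, h1, h2⟩ := bS p hp
    rw [schi p, mul_assoc]
    exact mul_le_mul_of_nonneg_right h2 (chi0 p)
  have s2 : ∫ p in Stadium α β, (max (p.1 - α) 0) ^ 2 * u p ^ 2 ≤ L ^ 2 * w ^ 2 := by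
    rw [hw2, ← integral_const_mul]
    refine setIntegral_mono_on (ci (by fun_prop)) (ichi.const_mul _) hS fun p hp => ?_
    obtain ⟨-, -, h1, h2⟩ := bS p hp
    have : (max (p.1 - α) 0) ^ 2 * u p ^ 2 = (max (p.1 - α) 0) ^ 2 * (chi α p.1 * u p ^ 2) := by
      have e1 : max (p.1 - α) 0 * u p = max (p.1 - α) 0 * (chi α p.1 * u p) := by
        rw [← mul_assoc, ← schi]
      rw [← chisq, ← mul_pow, ← mul_pow, e1]
    rw [this]
    exact mul_le_mul_of_nonneg_right (by gcongr) (chi0 p)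
  have s3 : √(∫ p in Stadium α β, (max (p.1 - α) 0 * u p) ^ 2) ≤ L * w := by
    refine sqrt_int_le L0.le (ci (by fun_prop)) ichi fun p hp => ?_
    obtain ⟨-, -, h1, h2⟩ := bS p hp
    rw [schi p, ← chisq, mul_assoc, mul_pow]
    exact mul_le_mul_of_nonneg_right (by gcongr) (sq_nonneg _)
  have s4 : √(∫ p in Stadium α β, ((max (p.1 - α) 0) ^ 2 * u p) ^ 2) ≤ L ^ 2 * w := by
    refine sqrt_int_le (by positivity) (ci (by fun_prop)) ichi fun p hp => ?_
    obtain ⟨-, -, h1, h2⟩ := bS p hp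
    have : ((max (p.1 - α) 0) ^ 2 * u p) ^ 2
        = ((max (p.1 - α) 0) ^ 2) ^ 2 * (chi α p.1 * u p ^ 2) := by
      have e1 : (max (p.1 - α) 0) ^ 2 * u p
          = max (p.1 - α) 0 * (max (p.1 - α) 0 * chi α p.1) * u p := by rw [← schi]; ring
      rw [e1, ← chisq]; ring
    rw [this]
    exact mul_le_mul_of_nonneg_right (by gcongr) (chi0 p)
  have t1 : |∫ p in Stadium α β, max (p.1 - α) 0 * (f p * u p)| ≤ nu * (L * w) := by
    have : ∀ p : ℝ × ℝ, max (p.1 - α) 0 * (f p * u p) = f p * (max (p.1 - α) 0 * u p) :=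
      fun p => by ring
    simp only [this]
    exact (csf _ (by fun_prop)).trans (mul_le_mul_of_nonneg_left s3 (Real.sqrt_nonneg _))
  have t2 : |∫ p in Stadium α β, (max (p.1 - α) 0) ^ 2 * (f p * u p)| ≤ nu * (L ^ 2 * w) := by
    have : ∀ p : ℝ × ℝ, (max (p.1 - α) 0) ^ 2 * (f p * u p)
        = f p * ((max (p.1 - α) 0) ^ 2 * u p) := fun p => by ring
    simp only [this]
    exact (csf _ (by fun_prop)).trans (mul_le_mul_of_nonneg_left s4 (Real.sqrt_nonneg _))
  have t3 : |∫ p in Stadium α β, chi α p.1 * (u p * ux p)| ≤ w * √A := by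
    have : ∀ p : ℝ × ℝ, chi α p.1 * (u p * ux p) = (chi α p.1 * u p) * ux p := fun p => by ring
    have i1 : IntegrableOn (fun p => (chi α p.1 * u p) * ux p) (Stadium α β) := by
      simp only [← this]; exact ci_chi (by fun_prop)
    have := cs (fun p => chi α p.1 * u p) ux (by simp only [chisq]; exact ichi)
      (ci (by fun_prop)) i1
    simp only [chisq] at this
    simpa only [mul_assoc] using this
  have t4 : -(∫ p in Stadium α β, 2 * max (p.1 - α) 0 * (u p * ux p))
      ≤ 1 / 2 * (∫ p in Stadium α β, (max (p.1 - α) 0) ^ 2 * (ux p ^ 2 + uy p ^ 2)) + 2 * w ^ 2 := by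
    rw [hw2, ← integral_neg, ← integral_const_mul, ← integral_const_mul,
      ← integral_add (ci (by fun_prop)) (ichi.const_mul _)]
    refine setIntegral_mono_on (ci (by fun_prop)) ((ci (by fun_prop)).add (ichi.const_mul _)) hS
      fun p hp => ?_
    have e1 : 2 * max (p.1 - α) 0 * (u p * ux p)
        = 2 * (max (p.1 - α) 0 * ux p) * (chi α p.1 * u p) := by
      conv_lhs => rw [schi p]
      ring
    rw [e1, ← chisq, mul_add, ← mul_pow, ← mul_pow]
    have q1 := sq_nonneg (max (p.1 - α) 0 * ux p + 2 * (chi α p.1 * u p))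
    have q2 := sq_nonneg (max (p.1 - α) 0 * uy p)
    clear * - q1 q2
    generalize max (p.1 - α) 0 * ux p = X at *
    generalize max (p.1 - α) 0 * uy p = Y at *
    generalize chi α p.1 * u p = Z at *
    linarith
  have gradb : ∀ a b c d : ℝ, |a| ≤ L → |b| ≤ L → (a * c + b * d) ^ 2 ≤ (2 * L) ^ 2 * (c ^ 2 + d ^ 2) := by
    intro a b c d ha hb
    have ha2 : a ^ 2 ≤ L ^ 2 := by rw [← sq_abs]; gcongr
    have hb2 : b ^ 2 ≤ L ^ 2 := by rw [← sq_abs]; gcongr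
    have h1 : (a * c + b * d) ^ 2 ≤ (a ^ 2 + b ^ 2) * (c ^ 2 + d ^ 2) := by
      nlinarith [sq_nonneg (a * d - b * c)]
    have h2 : (a ^ 2 + b ^ 2) * (c ^ 2 + d ^ 2) ≤ (2 * L) ^ 2 * (c ^ 2 + d ^ 2) :=
      mul_le_mul_of_nonneg_right (by nlinarith) (by positivity)
    linarith
  have hR := real_part (q0 := ∫ p in Stadium α β, f p * u p)
    (Q1 := ∫ p in Stadium α β, f p * ((p.1 + L) * ux p))
    (Q2 := ∫ p in Stadium α β, f p * (p.1 * ux p + p.2 * uy p))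
    (Q3 := ∫ p in Stadium α β, f p *
          ((max (p.1 - α) 0) ^ 2 * (max (p.1 - α) 0 * ux p + p.2 * uy p)))
    (G1 := ∫ p in Stadium α β, max (p.1 - α) 0 * (ux p ^ 2 + uy p ^ 2))
    (G2 := ∫ p in Stadium α β, (max (p.1 - α) 0) ^ 2 * (ux p ^ 2 + uy p ^ 2))
    L0 he K0 hlam (Real.sqrt_nonneg _) hnu hA0 hAD (Real.sqrt_nonneg _) hw E0
    (by simpa [hu] using csf u (by fun_prop))
    (by
      have := mul_le_mul_of_nonneg_left s1 (sq_nonneg lam)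
      linarith [(abs_le.1 t1).2, (abs_le.1 t3).1])
    (by
      have := mul_le_mul_of_nonneg_left s2 (sq_nonneg lam)
      linarith [(abs_le.1 t2).2])
    ((csf _ (by fun_prop)).trans (mul_le_mul_of_nonneg_left
      (sqrt_int_le (by positivity) (ci (by fun_prop)) (ci (by fun_prop)) fun p hp => by
        obtain ⟨h1, -, -, -⟩ := bS p hp
        rw [mul_pow]
        have := abs_le.1 h1
        exact mul_le_mul_of_nonneg_right (by nlinarith) (sq_nonneg _)) (Real.sqrt_nonneg _)))
    ((csf _ (by fun_prop)).trans (mul_le_mul_of_nonneg_left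
      (sqrt_int_le (by positivity) (ci (by fun_prop)) (ci (by fun_prop)) fun p hp => by
        obtain ⟨h1, h2, -, -⟩ := bS p hp
        exact gradb _ _ _ _ h1 h2) (Real.sqrt_nonneg _)))
    ((csf _ (by fun_prop)).trans (mul_le_mul_of_nonneg_left
      (sqrt_int_le (by positivity) (ci (by fun_prop)) (ci (by fun_prop)) fun p hp => by
        obtain ⟨-, h2, h3, h4⟩ := bS p hp
        have h5 := gradb (max (p.1 - α) 0) p.2 (ux p) (uy p) (by rwa [abs_of_nonneg h3]) h2
        generalize max (p.1 - α) 0 = s at *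
        have h6 : s ^ 2 * s ^ 2 ≤ s ^ 2 * L ^ 2 := by gcongr
        calc (s ^ 2 * (s * ux p + p.2 * uy p)) ^ 2
            = s ^ 2 * s ^ 2 * (s * ux p + p.2 * uy p) ^ 2 := by ring
          _ ≤ s ^ 2 * L ^ 2 * ((2 * L) ^ 2 * (ux p ^ 2 + uy p ^ 2)) := by
            apply mul_le_mul h6 h5 (sq_nonneg _) (by positivity)
          _ = _ := by ring) (Real.sqrt_nonneg _)))
    (by
      refine hm.trans (le_of_eq ?_)
      rw [E0, ← hwdef]
      ring)
  have : 1 / (4 * L ^ 2) ≤ A := by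
    rw [div_le_iff₀ (by positivity)]; linarith
  linarith

lemma bdry_subset {α β : ℝ} (hβ : 0 < β) : StadiumBoundary α β ⊆ Stadium α β := by
  rintro ⟨x, y⟩ (⟨h1, h2⟩ | ⟨h1, h2⟩)
  · left
    have := abs_le.1 h1
    refine ⟨this, ?_⟩
    simp only at h2 ⊢
    rcases h2 with h2 | h2 <;> rw [h2] <;> constructor <;> linarith
  · right
    simp only at h1 h2
    rcases abs_cases x with ⟨h, _⟩ | ⟨h, _⟩
    · left
      rw [h] at h1 h2
      exact ⟨h1.le, h2⟩
    · right
      rw [h] at h1 h2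
      refine ⟨?_, ?_⟩
      · simp only; rw [← h1]; apply le_of_eq; ring
      · simp only; linarith

lemma measurable_Wings (α β : ℝ) : MeasurableSet (Wings α β) := by
  apply MeasurableSet.union
  · exact (measurableSet_le (f := fun p : ℝ × ℝ => (p.1 - α) ^ 2 + p.2 ^ 2) (g := fun _ => β ^ 2)
      (by fun_prop) (by fun_prop)).inter
      (measurableSet_le (f := fun _ : ℝ × ℝ => α) (g := fun p => p.1) (by fun_prop) (by fun_prop))
  · exact (measurableSet_le (f := fun p : ℝ × ℝ => (p.1 + α) ^ 2 + p.2 ^ 2) (g := fun _ => β ^ 2)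
      (by fun_prop) (by fun_prop)).inter
      (measurableSet_le (f := fun p : ℝ × ℝ => p.1) (g := fun _ => -α) (by fun_prop) (by fun_prop))

lemma chi_le_wings {α β : ℝ} {v : ℝ × ℝ → ℝ} (hv : Continuous v) :
    ∫ p in Stadium α β, chi α p.1 * v p ^ 2 ≤ ∫ p in Wings α β, v p ^ 2 := by
  have hsub : Wings α β ⊆ Stadium α β := subset_union_right
  have e : ∫ p in Wings α β, v p ^ 2
      = ∫ p in Stadium α β, (Wings α β).indicator (fun p => v p ^ 2) p := by
    rw [setIntegral_indicator (measurable_Wings α β), inter_eq_right.2 hsub]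
  rw [e]
  refine setIntegral_mono_on (ci_chi (by fun_prop))
    ((ci (by fun_prop)).indicator (measurable_Wings α β))
    (isCompact_Stadium α β).measurableSet fun p hp => ?_
  by_cases hw : p ∈ Wings α β
  · rw [indicator_of_mem hw]
    unfold chi
    split_ifs
    · rw [one_mul]
    · rw [zero_mul]; positivity
  · rw [indicator_of_notMem hw]
    have hr : p ∈ Rect α β := hp.resolve_right hw
    have : p.1 ≤ α := hr.1.2
    unfold chi
    rw [if_neg (not_lt.2 this), zero_mul]

lemma key_contra {α β : ℝ} (hα : 0 < α) (hβ : 0 < β) (e : ℝ) (he : 0 < e) :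
    ∃ M > 0, ∀ d : QMDatum α β, 1 ≤ d.lam → √(∫ p in Stadium α β, d.f p ^ 2) ≤ 1 →
      (∫ p in Stadium α β, d.u p ^ 2) = 1 →
      √(∫ p in Wings α β, d.u p ^ 2) ≤ 1 / d.lam ^ 4 →
      1 / (4 * (α + β) ^ 2) ≤ 2 * e + M * (√(∫ p in Stadium α β, d.f p ^ 2) + 1 / d.lam) := by
  obtain ⟨M, hM, H⟩ := core hα hβ e he
  refine ⟨M, hM, fun d h1 h2 h3 h4 => ?_⟩
  obtain ⟨v, vx, vy, vxx, vxy, vyy, J, hv⟩ := exists_jet d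
  have hS := (isCompact_Stadium α β).measurableSet
  have ef : ∫ p in Stadium α β, d.f p ^ 2
      = ∫ p in Stadium α β, (- vxx p - vyy p - d.lam ^ 2 * v p) ^ 2 :=
    setIntegral_congr_fun hS fun p hp => by simp only [(hv p hp).2]
  have eu : ∫ p in Stadium α β, d.u p ^ 2 = ∫ p in Stadium α β, v p ^ 2 :=
    setIntegral_congr_fun hS fun p hp => by simp only [(hv p hp).1]
  have ew : ∫ p in Wings α β, d.u p ^ 2 = ∫ p in Wings α β, v p ^ 2 :=
    setIntegral_congr_fun (measurable_Wings α β) fun p hp => by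
      simp only [(hv p (subset_union_right hp)).1]
  rw [ef] at h2 ⊢
  rw [eu] at h3
  rw [ew] at h4
  refine H J (fun p hp => ?_) d.lam h1 _ (fun p => rfl) h2 h3 ?_
  · rw [← (hv p (bdry_subset hβ hp)).1]; exact d.dirichlet p hp
  · rw [one_div_pow]
    exact (Real.sqrt_le_sqrt (chi_le_wings J.cu)).trans h4
/-- There is `C > 0` depending only on `α, β` such that for every sequence of
real Dirichlet quasimode data with `‖u_k‖_{L²(S)} = 1`, `λ_k → ∞` and `‖f_k‖_{L²(S)} → 0`
(an `o(1)` quasimode), one has `‖u_k‖_{L²(W)} ≥ C λ_k⁻⁴` for all large `k`. -/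
theorem stmt4 (α β : ℝ) (hα : 0 < α) (hβ : 0 < β) :
    ∃ C > 0, ∀ d : ℕ → QMDatum α β,
      (∀ k, (∫ p in Stadium α β, ((d k).u p) ^ 2) = 1) →
      Tendsto (fun k => (d k).lam) atTop atTop →
      Tendsto (fun k => Real.sqrt (∫ p in Stadium α β, ((d k).f p) ^ 2)) atTop (nhds 0) →
      ∀ᶠ k in atTop,
        Real.sqrt (∫ p in Wings α β, ((d k).u p) ^ 2) ≥ C / (d k).lam ^ 4 := by
  have L0 : 0 < α + β := by positivity
  obtain ⟨M, hM, H⟩ := key_contra hα hβ (1 / (32 * (α + β) ^ 2)) (by positivity)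
  refine ⟨1, one_pos, fun d hu hlam hf => ?_⟩
  have hinv : Tendsto (fun k => 1 / (d k).lam) atTop (nhds 0) := by
    simp only [one_div]
    exact tendsto_inv_atTop_zero.comp hlam
  have hsum := (hf.add hinv).const_mul M
  rw [add_zero, mul_zero] at hsum
  have hc : 0 < 1 / (16 * (α + β) ^ 2) := by positivity
  filter_upwards [hlam.eventually_ge_atTop 1, hf.eventually (gt_mem_nhds one_pos),
    hsum.eventually (gt_mem_nhds hc)] with k k1 k2 k3
  by_contra hcon
  have h := H (d k) k1 k2.le (hu k) (not_le.1 hcon).le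
  have e1 : 1 / (4 * (α + β) ^ 2) = 4 * (1 / (16 * (α + β) ^ 2)) := by field_simp; norm_num
  have e2 : 2 * (1 / (32 * (α + β) ^ 2)) = 1 / (16 * (α + β) ^ 2) := by field_simp; norm_num
  rw [e1, e2] at h
  linarith
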